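/- In the tower construction, for every n ≥ 2 the ring Bₙ = Kr_{K_{n−1}(X′ₙ)}(D_{n−1}, b) is an r-dimensional Bézout domain. -/

import Mathlib

/- Preamble: the tower construction of Fontana–Kabbaj (Example 3.1).
All rings are realized as subsets/subrings of one ambient field `Amb k0 r`:
the rational function field over `k0` in the indeterminates
`X₁, X₂, …` (indexed by `ℕ`), `Y`, and `Z₁, …, Z_{r-1}`. -/

noncomputable section

open Polynomial

/-- Index type for the indeterminates: `Sum.inl n` is `Xₙ`, `Sum.inr (Sum.inl ())` is `Y`,
and `Sum.inr (Sum.inr i)` is `Z_{i+1}`. -/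
abbrev TowerVars (r : ℕ) : Type := ℕ ⊕ (Unit ⊕ Fin (r - 1))

/-- The ambient field: the fraction field of the polynomial ring over `k0` in all the
indeterminates. -/
abbrev Amb (k0 : Type) [Field k0] (r : ℕ) : Type :=
  FractionRing (MvPolynomial (TowerVars r) k0)

variable (k0 : Type) [Field k0] (r : ℕ)

/-- The indeterminate `Xₙ` as an element of the ambient field. -/
def ambX (n : ℕ) : Amb k0 r :=
  algebraMap (MvPolynomial (TowerVars r) k0) (Amb k0 r) (MvPolynomial.X (Sum.inl n))

/-- The indeterminate `Y` as an element of the ambient field. -/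
def ambY : Amb k0 r :=
  algebraMap (MvPolynomial (TowerVars r) k0) (Amb k0 r) (MvPolynomial.X (Sum.inr (Sum.inl ())))

/-- The indeterminates `Z₁, …, Z_{r-1}` as elements of the ambient field. -/
def ambZ (i : Fin (r - 1)) : Amb k0 r :=
  algebraMap (MvPolynomial (TowerVars r) k0) (Amb k0 r) (MvPolynomial.X (Sum.inr (Sum.inr i)))

/-- The image of the base field `k0` in the ambient field. -/
def baseSet : Set (Amb k0 r) :=
  Set.range fun c : k0 => algebraMap (MvPolynomial (TowerVars r) k0) (Amb k0 r) (MvPolynomial.C c)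

/-- `kₙ := k0(X₁, …, Xₙ)` as a subfield of the ambient field. -/
def kfld (n : ℕ) : Subfield (Amb k0 r) :=
  Subfield.closure (baseSet k0 r ∪ {x | ∃ i, 1 ≤ i ∧ i ≤ n ∧ x = ambX k0 r i})

/-- `Fₙ := kₙ(Z₁, …, Z_{r-1})`. -/
def Ffld (n : ℕ) : Subfield (Amb k0 r) :=
  Subfield.closure (↑(kfld k0 r n) ∪ Set.range (ambZ k0 r))

/-- `Kₙ := Fₙ(Y)`. -/
def Kfld (n : ℕ) : Subfield (Amb k0 r) :=
  Subfield.closure (↑(Ffld k0 r n) ∪ {ambY k0 r})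

/-- The polynomial ring `Fₙ[Y]` as a subring of the ambient field. -/
def polyRing (n : ℕ) : Subring (Amb k0 r) :=
  Subring.closure (↑(Ffld k0 r n) ∪ {ambY k0 r})

/-- `Vₙ := Fₙ[Y]_{(Y)}`, the localization of `Fₙ[Y]` at the prime `(Y)`, as a subset of
the ambient field. -/
def Vset (n : ℕ) : Set (Amb k0 r) :=
  {x | ∃ f ∈ polyRing k0 r n, ∃ g ∈ polyRing k0 r n,
    (¬ ∃ h ∈ polyRing k0 r n, g = ambY k0 r * h) ∧ x = f / g}

/-- `Mₙ := Y·Fₙ[Y]_{(Y)}`, the maximal ideal of `Vₙ`. -/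
def Mset (n : ℕ) : Set (Amb k0 r) :=
  {x | ∃ v ∈ Vset k0 r n, x = ambY k0 r * v}

/-- `Aₙ := kₙ + Mₙ`. -/
def Aset (n : ℕ) : Set (Amb k0 r) :=
  {x | ∃ c ∈ kfld k0 r n, ∃ m ∈ Mset k0 r n, x = c + m}

/-- `k := ⋃ₙ kₙ` as a subset of the ambient field. -/
def kfldU : Set (Amb k0 r) := ⋃ n, (kfld k0 r n : Set (Amb k0 r))

/-- `F := k(Z₁, …, Z_{r-1}) = ⋃ₙ Fₙ`. -/
def FfldU : Subfield (Amb k0 r) :=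
  Subfield.closure (kfldU k0 r ∪ Set.range (ambZ k0 r))

/-- `K := F(Y) = ⋃ₙ Kₙ`. -/
def KfldU : Subfield (Amb k0 r) :=
  Subfield.closure (↑(FfldU k0 r) ∪ {ambY k0 r})

/-- The polynomial ring `F[Y]`. -/
def polyRingU : Subring (Amb k0 r) :=
  Subring.closure (↑(FfldU k0 r) ∪ {ambY k0 r})

/-- `V := F[Y]_{(Y)}`. -/
def VsetU : Set (Amb k0 r) :=
  {x | ∃ f ∈ polyRingU k0 r, ∃ g ∈ polyRingU k0 r,
    (¬ ∃ h ∈ polyRingU k0 r, g = ambY k0 r * h) ∧ x = f / g}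

/-- `M := Y·F[Y]_{(Y)} = ⋃ₙ Mₙ`. -/
def MsetU : Set (Amb k0 r) :=
  {x | ∃ v ∈ VsetU k0 r, x = ambY k0 r * v}

/-- `A := k + M = ⋃ₙ Aₙ`. -/
def AsetU : Set (Amb k0 r) :=
  {x | ∃ c ∈ kfldU k0 r, ∃ m ∈ MsetU k0 r, x = c + m}

/-- `X′ₙ := (1 + Y·Xₙ)/Y`. -/
def ambX' (n : ℕ) : Amb k0 r :=
  (1 + ambY k0 r * ambX k0 r n) / ambY k0 r

/-- `1` belongs to the ideal of `W` generated by the coefficients of `g`, where `W` is a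
subring (given as a subset `S`) of the ambient field. -/
def unitContent (S : Set (Amb k0 r)) (g : Polynomial (Amb k0 r)) : Prop :=
  ∃ (t : Finset ℕ) (u : ℕ → Amb k0 r), (∀ i ∈ t, u i ∈ S) ∧ ∑ i ∈ t, u i * g.coeff i = 1

/-- The Nagata ring `W(T)` of a subring `W ⊆ Amb k0 r` (given as a subset `S`) in the
"variable" `T`: all fractions `f(T)/g(T)` with `f, g ∈ W[T]` and the coefficients of `g`
generating the unit ideal of `W`.  (When `T` is transcendental over `W` this is the usual
Nagata ring.) -/
def nagataSet (S : Set (Amb k0 r)) (T : Amb k0 r) : Set (Amb k0 r) :=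
  {x | ∃ f g : Polynomial (Amb k0 r), (∀ i, f.coeff i ∈ S) ∧ (∀ i, g.coeff i ∈ S) ∧
    unitContent k0 r S g ∧ x = f.eval T / g.eval T}

/-- The valuation overrings of a ring `D` (given as a subset) inside a subfield `L` of the
ambient field: subrings `W` with `D ⊆ W ⊆ L` such that for every `x ∈ L`, `x ∈ W` or
`x⁻¹ ∈ W`. -/
def valOverringsIn (D : Set (Amb k0 r)) (L : Subfield (Amb k0 r)) : Set (Subring (Amb k0 r)) :=
  {W | D ⊆ ↑W ∧ (W : Set (Amb k0 r)) ⊆ (L : Set (Amb k0 r)) ∧ ∀ x ∈ L, x ∈ W ∨ x⁻¹ ∈ W}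

/-- The Kronecker function ring `Kr_{L(T)}(D, b) = ⋂ {W(T) : W a valuation overring of `D`
in `L`}`, realized as a subset of the ambient field. -/
def krSet (D : Set (Amb k0 r)) (L : Subfield (Amb k0 r)) (T : Amb k0 r) : Set (Amb k0 r) :=
  ⋂ W ∈ valOverringsIn k0 r D L, nagataSet k0 r (↑W) T

/-- The tower `Dₙ`: `D₁ := A₁` and `Dₙ := Bₙ ∩ Aₙ` for `n ≥ 2`, where
`Bₙ := Kr_{K_{n-1}(X′ₙ)}(D_{n-1}, b)`.  (The value at `0` is junk, set to `D₁`.) -/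
def Dset : ℕ → Set (Amb k0 r)
  | 0 => Aset k0 r 1
  | 1 => Aset k0 r 1
  | n + 2 => krSet k0 r (Dset (n + 1)) (Kfld k0 r (n + 1)) (ambX' k0 r (n + 2)) ∩ Aset k0 r (n + 2)

/-- `Bₙ := Kr_{K_{n-1}(X′ₙ)}(D_{n-1}, b)` (meaningful for `n ≥ 2`). -/
def Bset (n : ℕ) : Set (Amb k0 r) :=
  krSet k0 r (Dset k0 r (n - 1)) (Kfld k0 r (n - 1)) (ambX' k0 r n)

/-- `𝓜ₙ := Mₙ ∩ Dₙ`. -/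
def MMset (n : ℕ) : Set (Amb k0 r) := Mset k0 r n ∩ Dset k0 r n

/-- `D := ⋃__{n ≥ 1} Dₙ`. -/
def DsetU : Set (Amb k0 r) := ⋃ n, Dset k0 r n

/-- `𝓜 := ⋃_{n ≥ 2} 𝓜ₙ`. -/
def MMsetU : Set (Amb k0 r) := ⋃ n, MMset k0 r (n + 2)

/-- The localization `D_m = {a/b : a, b ∈ D, b ∉ m}` of a subring `D` of the ambient
field (given as a subset) at (the complement of) a subset `m`. -/
def locAt (D m : Set (Amb k0 r)) : Set (Amb k0 r) :=
  {x | ∃ a ∈ D, ∃ b ∈ D, b ∉ m ∧ x = a / b}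

/-- The quotient field, inside the ambient field, of a subring given as a subset. -/
def qfSet (D : Set (Amb k0 r)) : Set (Amb k0 r) :=
  {x | ∃ a ∈ D, ∃ b ∈ D, b ≠ 0 ∧ x = a / b}

/-- The nonunits of a subring of the ambient field, given as a subset: in a local
subring of a field these form the maximal ideal. -/
def nonunitsIn (S : Set (Amb k0 r)) : Set (Amb k0 r) :=
  {x | x ∈ S ∧ (x = 0 ∨ x⁻¹ ∉ S)}

/-- A subring `A` of the ambient field is a pseudo-valuation domain: it is local, and its
maximal ideal (= set of nonunits) is also the maximal ideal of some valuation overring of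
`A` in its quotient field. -/
def IsPVDSub (A : Subring (Amb k0 r)) : Prop :=
  IsLocalRing ↥A ∧
  ∃ W : Subring (Amb k0 r), (A : Set (Amb k0 r)) ⊆ ↑W ∧
    (W : Set (Amb k0 r)) ⊆ qfSet k0 r ↑A ∧
    (∀ x ∈ qfSet k0 r (A : Set (Amb k0 r)), x ∈ W ∨ x⁻¹ ∈ W) ∧
    nonunitsIn k0 r ↑A = nonunitsIn k0 r ↑W

/-- The valuative dimension of a subring of the ambient field: the supremum of the Krull
dimensions of its valuation overrings (in its quotient field). -/
def subValuativeDim (A : Subring (Amb k0 r)) : WithBot ℕ∞ :=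
  ⨆ W : {W : Subring (Amb k0 r) // (A : Set (Amb k0 r)) ⊆ ↑W ∧
      (W : Set (Amb k0 r)) ⊆ qfSet k0 r ↑A ∧
      ∀ x ∈ qfSet k0 r (A : Set (Amb k0 r)), x ∈ W ∨ x⁻¹ ∈ W},
    ringKrullDim ↥(W : Subring (Amb k0 r))


/-- `1` belongs to the ideal generated by the coefficients of a multivariable polynomial
`g` in the subring given by the subset `S`. -/
def mvUnitContent (S : Set (Amb k0 r)) (g : MvPolynomial ℕ (Amb k0 r)) : Prop :=
  ∃ (t : Finset (ℕ →₀ ℕ)) (u : (ℕ →₀ ℕ) → Amb k0 r),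
    (∀ m ∈ t, u m ∈ S) ∧ ∑ m ∈ t, u m * MvPolynomial.coeff m g = 1

/-- The Nagata ring `W(T₀, T₁, …)` of a subring `W` of the ambient field (given as a
subset `S`) in countably many "variables" `T j`: all fractions `f(T)/g(T)` with
`f, g ∈ W[T₀, T₁, …]` and the coefficients of `g` generating the unit ideal of `W`. -/
def nagataSetMv (S : Set (Amb k0 r)) (T : ℕ → Amb k0 r) : Set (Amb k0 r) :=
  {x | ∃ f g : MvPolynomial ℕ (Amb k0 r),
    (∀ m, MvPolynomial.coeff m f ∈ S) ∧ (∀ m, MvPolynomial.coeff m g ∈ S) ∧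
    mvUnitContent k0 r S g ∧ x = MvPolynomial.eval T f / MvPolynomial.eval T g}

/-- A subring `S` of the ambient field is an *essential* domain: `S` is the intersection
of a family of localizations `S_p` at primes `p ∈ Δ`, each of which is a valuation domain
(with quotient field the quotient field of `S`). -/
def IsEssentialSub (S : Subring (Amb k0 r)) : Prop :=
  ∃ Δ : Set (Ideal ↥S),
    (∀ p ∈ Δ, p.IsPrime) ∧
    (∀ p ∈ Δ, ∀ x ∈ qfSet k0 r (S : Set (Amb k0 r)),
      x ∈ locAt k0 r ↑S (Subtype.val '' (p : Set ↥S)) ∨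
      x⁻¹ ∈ locAt k0 r ↑S (Subtype.val '' (p : Set ↥S))) ∧
    (S : Set (Amb k0 r)) = ⋂ p ∈ Δ, locAt k0 r ↑S (Subtype.val '' (p : Set ↥S))

end
noncomputable section GenericPart

open Polynomial

namespace TowerGen

variable {Om : Type*} [Field Om]

/-- Generic valuation overrings. -/
def VO (D : Set Om) (L : Subfield Om) : Set (Subring Om) :=
  {W | D ⊆ ↑W ∧ (W : Set Om) ⊆ (L : Set Om) ∧ ∀ x ∈ L, x ∈ W ∨ x⁻¹ ∈ W}

/-- Generic Nagata set. -/
def NG (S : Set Om) (T : Om) : Set Om :=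
  {x | ∃ f g : Polynomial Om, (∀ i, f.coeff i ∈ S) ∧ (∀ i, g.coeff i ∈ S) ∧
    (∃ (t : Finset ℕ) (u : ℕ → Om), (∀ i ∈ t, u i ∈ S) ∧ ∑ i ∈ t, u i * g.coeff i = 1) ∧
    x = f.eval T / g.eval T}

/-- Generic Kronecker function ring. -/
def KR (D : Set Om) (L : Subfield Om) (T : Om) : Set Om :=
  ⋂ W ∈ VO D L, NG (↑W) T

/-- Polynomials with coefficients in a subring. -/
def PS (S : Subring Om) : Subring Om[X] where
  carrier := {f | ∀ i, f.coeff i ∈ S}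
  zero_mem' := fun i => by simp [S.zero_mem]
  one_mem' := fun i => by
    rw [coeff_one]; split_ifs
    · exact S.one_mem
    · exact S.zero_mem
  add_mem' := fun ha hb i => by rw [coeff_add]; exact S.add_mem (ha i) (hb i)
  neg_mem' := fun ha i => by rw [coeff_neg]; exact S.neg_mem (ha i)
  mul_mem' := fun ha hb i => by
    rw [coeff_mul]; exact S.sum_mem fun _ _ => S.mul_mem (ha _) (hb _)

theorem mem_PS {S : Subring Om} {f : Om[X]} : f ∈ PS S ↔ ∀ i, f.coeff i ∈ S := Iff.rfl

theorem C_mem_PS {S : Subring Om} {a : Om} (ha : a ∈ S) : C a ∈ PS S := fun i => by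
  rw [coeff_C]; split_ifs
  · exact ha
  · exact S.zero_mem

theorem X_mem_PS (S : Subring Om) : (X : Om[X]) ∈ PS S := fun i => by
  rw [coeff_X]; split_ifs
  · exact S.one_mem
  · exact S.zero_mem

theorem PS_mono {S S' : Subring Om} (h : S ≤ S') : PS S ≤ PS S' := fun _ hf i => h (hf i)

theorem eval_mem {S R : Subring Om} (h : S ≤ R) {T : Om} (hT : T ∈ R) {f : Om[X]} (hf : f ∈ PS S) :
    f.eval T ∈ R := by
  rw [eval_eq_sum_range]
  exact R.sum_mem fun i _ => R.mul_mem (h (hf i)) (R.pow_mem hT i)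

/-- `T` is transcendental over `L`. -/
def Tr (L : Subfield Om) (T : Om) : Prop := ∀ f ∈ PS L.toSubring, f.eval T = 0 → f = 0

theorem Tr.inj {L : Subfield Om} {T : Om} (h : Tr L T) {f g : Om[X]} (hf : f ∈ PS L.toSubring)
    (hg : g ∈ PS L.toSubring) (e : f.eval T = g.eval T) : f = g := by
  have := h (f - g) (sub_mem hf hg) (by simp [e])
  exact sub_eq_zero.mp this

theorem Tr.ne {L : Subfield Om} {T : Om} (h : Tr L T) {f : Om[X]} (hf : f ∈ PS L.toSubring)
    (e : f ≠ 0) : f.eval T ≠ 0 := fun h' => e (h f hf h')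

/-- Valuation rings of `L`. -/
def IsV (W : Subring Om) (L : Subfield Om) : Prop :=
  W ≤ L.toSubring ∧ ∀ x ∈ L, x ∈ W ∨ x⁻¹ ∈ W

theorem VO.isV {D : Set Om} {L : Subfield Om} {W : Subring Om} (h : W ∈ VO D L) : IsV W L :=
  ⟨h.2.1, h.2.2⟩

/-- nonunits -/
def mm (W : Subring Om) : Set Om := {x | x ∈ W ∧ (x = 0 ∨ x⁻¹ ∉ W)}

theorem mm_zero (W : Subring Om) : (0 : Om) ∈ mm W := ⟨W.zero_mem, Or.inl rfl⟩

theorem mm_mul {W : Subring Om} {a b : Om} (ha : a ∈ W) (hb : b ∈ mm W) : a * b ∈ mm W := by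
  refine ⟨W.mul_mem ha hb.1, ?_⟩
  by_cases h0 : a * b = 0
  · exact Or.inl h0
  right
  intro h
  have ha0 : a ≠ 0 := left_ne_zero_of_mul h0
  have hb0 : b ≠ 0 := right_ne_zero_of_mul h0
  rcases hb.2 with h1 | h1
  · exact hb0 h1
  · apply h1
    have : b⁻¹ = a * (a * b)⁻¹ := by field_simp
    rw [this]; exact W.mul_mem ha h

theorem mm_one (W : Subring Om) : (1 : Om) ∉ mm W := by
  rintro ⟨_, h | h⟩
  · exact one_ne_zero h
  · exact h (by simp [W.one_mem])

theorem mm_add {W : Subring Om} {L : Subfield Om} (hW : IsV W L) {a b : Om} (ha : a ∈ mm W)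
    (hb : b ∈ mm W) : a + b ∈ mm W := by
  by_cases ha0 : a = 0
  · simpa [ha0] using hb
  by_cases hb0 : b = 0
  · simpa [hb0] using ha
  rcases hW.2 (a / b) (L.div_mem (hW.1 ha.1) (hW.1 hb.1)) with h | h
  · have : a + b = (a / b + 1) * b := by field_simp
    rw [this]; exact mm_mul (W.add_mem h W.one_mem) hb
  · have : a + b = ((a / b)⁻¹ + 1) * a := by field_simp; ring
    rw [this]; exact mm_mul (W.add_mem h W.one_mem) ha

theorem mm_sum {W : Subring Om} {L : Subfield Om} (hW : IsV W L) {ι : Type*} (s : Finset ι)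
    (f : ι → Om) (h : ∀ i ∈ s, f i ∈ mm W) : ∑ i ∈ s, f i ∈ mm W := by
  classical
  induction s using Finset.induction_on with
  | empty => simpa using mm_zero W
  | insert a s ha ih =>
    rw [Finset.sum_insert ha]
    exact mm_add hW (h a (by simp)) (ih fun i hi => h i (by simp [hi]))

/-- the maximal ideal -/
def mI {W : Subring Om} {L : Subfield Om} (hW : IsV W L) : Ideal W where
  carrier := {x | (x : Om) ∈ mm W}
  zero_mem' := mm_zero W
  add_mem' := fun ha hb => mm_add hW ha hb
  smul_mem' := fun c _ hx => mm_mul c.2 hx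

theorem mm_inv {W : Subring Om} {x : Om} (hx : x ∈ W) (h : x ∉ mm W) : x ≠ 0 ∧ x⁻¹ ∈ W := by
  by_contra h'
  apply h
  refine ⟨hx, ?_⟩
  by_contra h''
  push Not at h''
  exact h' h''

theorem mI_prime {W : Subring Om} {L : Subfield Om} (hW : IsV W L) : (mI hW).IsPrime := by
  refine ⟨?_, ?_⟩
  · rw [Ideal.ne_top_iff_one]; exact mm_one W
  · intro x y h
    by_contra hc
    push Not at hc
    obtain ⟨hx, hy⟩ := hc
    obtain ⟨hx0, hx1⟩ := mm_inv x.2 hx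
    apply hy
    have : (y : Om) = (x : Om)⁻¹ * (x * y) := by field_simp
    change (y : Om) ∈ mm W
    rw [this]
    exact mm_mul hx1 h

/-- coefficients in the maximal ideal -/
def MP (W : Subring Om) : Set Om[X] := {f | ∀ i, f.coeff i ∈ mm W}

theorem MP_le {W : Subring Om} {f : Om[X]} (h : f ∈ MP W) : f ∈ PS W := fun i => (h i).1

theorem MP_add {W : Subring Om} {L : Subfield Om} (hW : IsV W L) {f g : Om[X]} (hf : f ∈ MP W)
    (hg : g ∈ MP W) : f + g ∈ MP W := fun i => by
  rw [coeff_add]; exact mm_add hW (hf i) (hg i)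

theorem MP_mul {W : Subring Om} {L : Subfield Om} (hW : IsV W L) {f g : Om[X]} (hf : f ∈ PS W)
    (hg : g ∈ MP W) : f * g ∈ MP W := fun i => by
  rw [coeff_mul]; exact mm_sum hW _ _ fun _ _ => mm_mul (hf _) (hg _)

theorem MP_prime {W : Subring Om} {L : Subfield Om} (hW : IsV W L) {f g : Om[X]} (hf : f ∈ PS W)
    (hg : g ∈ PS W) (h : f * g ∈ MP W) : f ∈ MP W ∨ g ∈ MP W := by
  have := mI_prime hW
  have key : ∀ p ∈ PS W, ∃ q : W[X], q.map W.subtype = p ∧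
      (q ∈ Ideal.map (C : W →+* W[X]) (mI hW) ↔ p ∈ MP W) := by
    intro p hp
    have : p ∈ Polynomial.lifts W.subtype := by
      rw [lifts_iff_coeff_lifts]; intro i; exact ⟨⟨_, hp i⟩, rfl⟩
    obtain ⟨q, rfl⟩ := (mem_lifts _).1 this
    refine ⟨q, rfl, ?_⟩
    rw [Ideal.mem_map_C_iff]
    refine forall_congr' fun i => ?_
    rw [coeff_map]; exact Iff.rfl
  obtain ⟨q1, e1, h1⟩ := key f hf
  obtain ⟨q2, e2, h2⟩ := key g hg
  obtain ⟨q3, e3, h3⟩ := key _ (MP_le h)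
  have e : q3 = q1 * q2 := by
    apply Polynomial.map_injective W.subtype Subtype.val_injective
    rw [Polynomial.map_mul, e1, e2, e3]
  rw [← h1, ← h2]
  apply (Ideal.isPrime_map_C_of_isPrime (P := mI hW)).mem_or_mem
  rw [← e, h3]; exact h

theorem one_nMP (W : Subring Om) : (1 : Om[X]) ∉ MP W := fun h => mm_one W (by simpa using h 0)

/-- Nagata membership. -/
theorem mem_NG {W : Subring Om} {L : Subfield Om} (hW : IsV W L) {T x : Om} :
    x ∈ NG (W : Set Om) T ↔ ∃ f ∈ PS W, ∃ g ∈ PS W, g ∉ MP W ∧ x = f.eval T / g.eval T := by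
  constructor
  · rintro ⟨f, g, hf, hg, ⟨t, u, hu, hs⟩, hx⟩
    refine ⟨f, hf, g, hg, ?_, hx⟩
    intro hm
    apply mm_one W
    rw [← hs]
    exact mm_sum hW _ _ fun i hi => mm_mul (hu i hi) (hm i)
  · rintro ⟨f, hf, g, hg, hm, hx⟩
    refine ⟨f, g, hf, hg, ?_, hx⟩
    have : ∃ j, g.coeff j ∉ mm W := by
      by_contra hc; push Not at hc; exact hm hc
    obtain ⟨j, hj⟩ := this
    obtain ⟨h0, h1⟩ := mm_inv (hg j) hj
    refine ⟨{j}, fun _ => (g.coeff j)⁻¹, ?_, ?_⟩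
    · intro i _; exact h1
    · simp [h0]

/-- A finite family has an element of minimal value. -/
theorem exists_dom {W : Subring Om} {L : Subfield Om} (hW : IsV W L) {ι : Type*} (s : Finset ι)
    (hs : s.Nonempty) (a : ι → Om) (ha : ∀ i ∈ s, a i ∈ L) (ha0 : ∀ i ∈ s, a i ≠ 0) :
    ∃ j ∈ s, ∀ i ∈ s, a i / a j ∈ W := by
  classical
  induction hs using Finset.Nonempty.cons_induction with
  | singleton b =>
    refine ⟨b, by simp, fun i hi => ?_⟩
    simp only [Finset.mem_singleton] at hi
    subst hi
    rw [div_self (ha0 _ (by simp))]; exact W.one_mem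
  | cons b s hb hs ih =>
    obtain ⟨j, hj, h⟩ := ih (fun i hi => ha i (by simp [hi])) (fun i hi => ha0 i (by simp [hi]))
    have hb0 := ha0 b (by simp)
    have hj0 := ha0 j (by simp [hj])
    rcases hW.2 (a b / a j) (L.div_mem (ha _ (by simp)) (ha _ (by simp [hj]))) with h' | h'
    · refine ⟨j, by simp [hj], fun i hi => ?_⟩
      rcases Finset.mem_cons.1 hi with rfl | hi
      · exact h'
      · exact h i hi
    · refine ⟨b, by simp, fun i hi => ?_⟩
      rcases Finset.mem_cons.1 hi with rfl | hi
      · rw [div_self hb0]; exact W.one_mem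
      · have : a i / a b = (a i / a j) * (a b / a j)⁻¹ := by field_simp
        rw [this]; exact W.mul_mem (h i hi) h'

theorem exists_dom_coeff {W : Subring Om} {L : Subfield Om} (hW : IsV W L) {h : Om[X]}
    (hh : h ∈ PS L.toSubring) (h0 : h ≠ 0) :
    ∃ j, h.coeff j ≠ 0 ∧ ∀ i, h.coeff i / h.coeff j ∈ W := by
  obtain ⟨j, hj, H⟩ := exists_dom hW h.support (nonempty_support_iff.2 h0) h.coeff
    (fun i _ => hh i) (fun i hi => mem_support_iff.1 hi)
  refine ⟨j, mem_support_iff.1 hj, fun i => ?_⟩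
  by_cases hi : h.coeff i = 0
  · rw [hi, zero_div]; exact W.zero_mem
  · exact H i (mem_support_iff.2 hi)

/-- Lemma G. -/
theorem mem_KR {D : Set Om} {L : Subfield Om} {T : Om} {p h : Om[X]}
    (hh : h ∈ PS L.toSubring) (h0 : h ≠ 0)
    (hp : ∀ i, ∃ j, p.coeff i = h.coeff j) : p.eval T / h.eval T ∈ KR D L T := by
  simp only [KR, Set.mem_iInter]
  intro W hW
  have hV := VO.isV hW
  rw [mem_NG hV]
  obtain ⟨j, hj, H⟩ := exists_dom_coeff hV hh h0
  refine ⟨C (h.coeff j)⁻¹ * p, ?_, C (h.coeff j)⁻¹ * h, ?_, ?_, ?_⟩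
  · intro i
    obtain ⟨j', hj'⟩ := hp i
    rw [coeff_C_mul, hj', mul_comm, ← div_eq_mul_inv]; exact H j'
  · intro i
    rw [coeff_C_mul, mul_comm, ← div_eq_mul_inv]; exact H i
  · intro hm
    apply mm_one W
    have := hm j
    rwa [coeff_C_mul, inv_mul_cancel₀ hj] at this
  · simp only [eval_mul, eval_C]
    rw [mul_div_mul_left _ _ (inv_ne_zero hj)]

theorem coeff_big (h : Om[X]) : h.coeff (h.natDegree + 1) = 0 :=
  coeff_eq_zero_of_natDegree_lt (Nat.lt_succ_self _)

theorem T_mem_KR {D : Set Om} {L : Subfield Om} {T : Om} : T ∈ KR D L T := by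
  have := mem_KR (D := D) (L := L) (T := T) (p := X) (h := 1) (one_mem _) one_ne_zero ?_
  · simpa using this
  · intro i
    rw [coeff_X]
    split_ifs
    · exact ⟨0, by simp⟩
    · exact ⟨1, by simp [coeff_one]⟩

theorem Tinv_mem_KR {D : Set Om} {L : Subfield Om} {T : Om} : T⁻¹ ∈ KR D L T := by
  have := mem_KR (D := D) (L := L) (T := T) (p := 1) (h := X) (X_mem_PS _) X_ne_zero ?_
  · simpa using this
  · intro i
    rw [coeff_one]
    split_ifs
    · exact ⟨1, by simp⟩
    · exact ⟨0, by simp⟩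

theorem D_mem_KR {D : Set Om} {L : Subfield Om} {T : Om} : D ⊆ KR D L T := by
  intro d hd
  simp only [KR, Set.mem_iInter]
  intro W hW
  rw [mem_NG (VO.isV hW)]
  exact ⟨C d, C_mem_PS (hW.1 hd), 1, one_mem _, one_nMP W, by simp⟩

theorem coeff_div_mem_KR {D : Set Om} {L : Subfield Om} {T : Om} {h : Om[X]}
    (hh : h ∈ PS L.toSubring) (h0 : h ≠ 0) (j : ℕ) : h.coeff j / h.eval T ∈ KR D L T := by
  have := mem_KR (D := D) (L := L) (T := T) (p := C (h.coeff j)) hh h0 ?_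
  · simpa using this
  · intro i
    rw [coeff_C]
    split_ifs
    · exact ⟨j, rfl⟩
    · exact ⟨_, (coeff_big h).symm⟩

/-- `h = f + X^m g` -/
theorem fg_mem {D : Set Om} {L : Subfield Om} {T : Om} {f g : Om[X]}
    (hf : f ∈ PS L.toSubring) (hg : g ∈ PS L.toSubring) (hg0 : g ≠ 0) (m : ℕ)
    (hm : f.natDegree < m) :
    f + X ^ m * g ≠ 0 ∧ f.eval T / (f + X ^ m * g).eval T ∈ KR D L T ∧
      g.eval T / (f + X ^ m * g).eval T ∈ KR D L T := by
  have hc : ∀ i, (f + X ^ m * g).coeff (i + m) = g.coeff i := by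
    intro i
    rw [coeff_add, coeff_X_pow_mul, coeff_eq_zero_of_natDegree_lt (by omega), zero_add]
  have hc' : ∀ i, i < m → (f + X ^ m * g).coeff i = f.coeff i := by
    intro i hi
    rw [coeff_add, coeff_X_pow_mul', if_neg (by omega), add_zero]
  have h0 : f + X ^ m * g ≠ 0 := by
    intro h
    apply hg0
    ext i
    rw [← hc i, h]; simp
  have hh : f + X ^ m * g ∈ PS L.toSubring :=
    add_mem hf (mul_mem (pow_mem (X_mem_PS _) _) hg)
  refine ⟨h0, mem_KR hh h0 ?_, mem_KR hh h0 fun i => ⟨i + m, (hc i).symm⟩⟩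
  intro i
  by_cases hi : i < m
  · exact ⟨i, (hc' i hi).symm⟩
  · refine ⟨_, Eq.trans ?_ (coeff_big _).symm⟩
    exact coeff_eq_zero_of_natDegree_lt (by omega)

/-- For `y ∈ L`: `y/(1+yT)` and `1/(1+yT)` are in the Kronecker ring. -/
theorem y_mem {D : Set Om} {L : Subfield Om} {T y : Om} (hy : y ∈ L) (hT : Tr L T) :
    1 + y * T ≠ 0 ∧ y / (1 + y * T) ∈ KR D L T ∧ 1 / (1 + y * T) ∈ KR D L T := by
  have hh : (1 + C y * X : Om[X]) ∈ PS L.toSubring :=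
    add_mem (one_mem _) (mul_mem (C_mem_PS hy) (X_mem_PS _))
  have c0 : (1 + C y * X : Om[X]).coeff 0 = 1 := by simp
  have c1 : (1 + C y * X : Om[X]).coeff 1 = y := by simp [coeff_one]
  have h0 : (1 + C y * X : Om[X]) ≠ 0 := by
    intro h; rw [h] at c0; simp at c0
  have e : (1 + C y * X : Om[X]).eval T = 1 + y * T := by simp
  have a := coeff_div_mem_KR (D := D) (T := T) hh h0 1
  have b := coeff_div_mem_KR (D := D) (T := T) hh h0 0
  rw [c1, e] at a
  rw [c0, e] at b
  refine ⟨?_, a, b⟩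
  rw [← e]; exact hT.ne hh h0

/-- The field `L(T)`. -/
def LT (L : Subfield Om) (T : Om) : Subfield Om := Subfield.closure (↑L ∪ {T})

theorem mem_LT {L : Subfield Om} {T : Om} {x : Om} (hx : x ∈ LT L T) :
    ∃ f ∈ PS L.toSubring, ∃ g ∈ PS L.toSubring, g.eval T ≠ 0 ∧ x = f.eval T / g.eval T := by
  induction hx using Subfield.closure_induction with
  | mem x hx =>
    rcases hx with hx | hx
    · exact ⟨C x, C_mem_PS hx, 1, one_mem _, by simp, by simp⟩
    · rw [Set.mem_singleton_iff] at hx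
      exact ⟨X, X_mem_PS _, 1, one_mem _, by simp, by simp [hx]⟩
  | one => exact ⟨1, one_mem _, 1, one_mem _, by simp, by simp⟩
  | add x y _ _ hx hy =>
    obtain ⟨f, hf, g, hg, h0, rfl⟩ := hx
    obtain ⟨f', hf', g', hg', h0', rfl⟩ := hy
    refine ⟨f * g' + g * f', add_mem (mul_mem hf hg') (mul_mem hg hf'), g * g', mul_mem hg hg',
      ?_, ?_⟩
    · simp [h0, h0']
    · simp only [eval_add, eval_mul]; rw [div_add_div _ _ h0 h0']
  | neg x _ hx =>
    obtain ⟨f, hf, g, hg, h0, rfl⟩ := hx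
    exact ⟨-f, neg_mem hf, g, hg, h0, by simp [neg_div]⟩
  | inv x _ hx =>
    obtain ⟨f, hf, g, hg, h0, rfl⟩ := hx
    by_cases h : f.eval T = 0
    · exact ⟨0, zero_mem _, 1, one_mem _, by simp, by simp [h]⟩
    · exact ⟨g, hg, f, hf, h, by simp⟩
  | mul x y _ _ hx hy =>
    obtain ⟨f, hf, g, hg, h0, rfl⟩ := hx
    obtain ⟨f', hf', g', hg', h0', rfl⟩ := hy
    refine ⟨f * f', mul_mem hf hf', g * g', mul_mem hg hg', ?_, ?_⟩
    · simp [h0, h0']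
    · simp only [eval_mul]; rw [div_mul_div_comm]

theorem L_le_LT (L : Subfield Om) (T : Om) : L ≤ LT L T :=
  fun _ hx => Subfield.subset_closure (Or.inl hx)

theorem T_mem_LT (L : Subfield Om) (T : Om) : T ∈ LT L T :=
  Subfield.subset_closure (Or.inr rfl)

theorem eval_mem_LT {L : Subfield Om} {T : Om} {f : Om[X]} (hf : f ∈ PS L.toSubring) :
    f.eval T ∈ LT L T :=
  eval_mem (R := (LT L T).toSubring) (S := L.toSubring) (fun _ h => L_le_LT L T h)
    (T_mem_LT L T) hf

theorem self_VO {D : Set Om} {L : Subfield Om} (hD : D ⊆ L) : L.toSubring ∈ VO D L :=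
  ⟨hD, fun _ h => h, fun _ h => Or.inl h⟩

theorem KR_le {D : Set Om} {L : Subfield Om} {T : Om} (hD : D ⊆ L) : KR D L T ⊆ LT L T := by
  intro x hx
  simp only [KR, Set.mem_iInter] at hx
  obtain ⟨f, g, hf, hg, -, rfl⟩ := hx _ (self_VO hD)
  exact div_mem (eval_mem_LT hf) (eval_mem_LT hg)

/-- Lemma U. -/
theorem lemU {D : Set Om} {L : Subfield Om} {T : Om} {R : Subring Om}
    (hR : KR D L T ⊆ R) (hV : ∀ x ∈ L, x ∈ R ∨ x⁻¹ ∈ R) {f : Om[X]} (hf : f ∈ PS L.toSubring)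
    (h0 : f ≠ 0) : ∃ a ∈ L, a ≠ 0 ∧ f.eval T / a ∈ R ∧ a / f.eval T ∈ R := by
  have hW : IsV (R ⊓ L.toSubring) L := by
    refine ⟨inf_le_right, fun x hx => ?_⟩
    rcases hV x hx with h | h
    · exact Or.inl ⟨h, hx⟩
    · exact Or.inr ⟨h, L.inv_mem hx⟩
  obtain ⟨j, hj, H⟩ := exists_dom_coeff hW hf h0
  refine ⟨f.coeff j, hf j, hj, ?_, hR (coeff_div_mem_KR hf h0 j)⟩
  have : f.eval T / f.coeff j = (C (f.coeff j)⁻¹ * f).eval T := by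
    simp [div_eq_mul_inv, mul_comm]
  rw [this]
  refine eval_mem (S := R ⊓ L.toSubring) inf_le_left (hR T_mem_KR) fun i => ?_
  rw [coeff_C_mul, mul_comm, ← div_eq_mul_inv]; exact H i

theorem lemU' {D : Set Om} {L : Subfield Om} {T : Om} {R R' : Subring Om}
    (hR : KR D L T ⊆ R) (hV : ∀ x ∈ L, x ∈ R ∨ x⁻¹ ∈ R) (hRR : R ≤ R')
    (hL : ∀ x ∈ L, x ∈ R' → x ∈ R) {x : Om} (hx : x ∈ LT L T) (hx' : x ∈ R') : x ∈ R := by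
  obtain ⟨f, hf, g, hg, g0, rfl⟩ := mem_LT hx
  by_cases f0 : f.eval T = 0
  · simp [f0, R.zero_mem]
  obtain ⟨a, ha, a0, h1, h2⟩ := lemU hR hV hf (by rintro rfl; simp at f0)
  obtain ⟨b, hb, b0, h3, h4⟩ := lemU hR hV hg (by rintro rfl; simp at g0)
  have e1 : a / b = f.eval T / g.eval T * (g.eval T / b) * (a / f.eval T) := by field_simp
  have e2 : f.eval T / g.eval T = (a / b) * (f.eval T / a) * (b / g.eval T) := by field_simp
  rw [e2]
  refine R.mul_mem (R.mul_mem (hL _ (div_mem ha hb) ?_) h1) h4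
  rw [e1]
  exact R'.mul_mem (R'.mul_mem hx' (hRR h3)) (hRR h2)

/-- Bézout. -/
theorem bezout {D : Set Om} {L : Subfield Om} {T : Om} (hT : Tr L T) (hD : D ⊆ L) (B : Subring Om)
    (hB : (B : Set Om) = KR D L T) : IsBezout B := by
  rw [IsBezout.iff_span_pair_isPrincipal]
  rintro ⟨x, hx⟩ ⟨y, hy⟩
  have memB : ∀ z, z ∈ KR D L T → z ∈ B := fun z hz => by
    rw [← SetLike.mem_coe, hB]; exact hz
  have hx' := KR_le hD (hB ▸ hx : x ∈ KR D L T)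
  have hy' := KR_le hD (hB ▸ hy : y ∈ KR D L T)
  by_cases y0 : y = 0
  · subst y0
    refine ⟨⟨⟨x, hx⟩, ?_⟩⟩
    have : (⟨0, hy⟩ : B) = 0 := rfl
    rw [this, Ideal.span_pair_zero]
  obtain ⟨f, hf, g, hg, g0, hxe⟩ := mem_LT hx'
  obtain ⟨f', hf', g', hg', g0', hye⟩ := mem_LT hy'
  have f0' : f'.eval T ≠ 0 := by rintro h; simp [h] at hye; exact y0 hye
  obtain ⟨h0, h1, h2⟩ := fg_mem (D := D) (T := T) (mul_mem hf hg') (mul_mem hf' hg)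
    (by intro h; have := congrArg (eval T) h; simp [g0, f0'] at this) _ (Nat.lt_succ_self _)
  set m := (f * g').natDegree.succ
  have hh : f * g' + X ^ m * (f' * g) ∈ PS L.toSubring :=
    add_mem (mul_mem hf hg') (mul_mem (pow_mem (X_mem_PS _) _) (mul_mem hf' hg))
  have hne := hT.ne hh h0
  set H := (f * g' + X ^ m * (f' * g)).eval T with hH
  have ez : x + T ^ m * y = H / (g.eval T * g'.eval T) := by
    rw [hH, hxe, hye]; simp only [eval_add, eval_mul, eval_pow, eval_X]; field_simp
  have hTB : T ∈ B := memB _ T_mem_KR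
  have hz : x + T ^ m * y ∈ B := B.add_mem hx (B.mul_mem (B.pow_mem hTB m) hy)
  refine ⟨⟨⟨x + T ^ m * y, hz⟩, ?_⟩⟩
  change Ideal.span _ = Ideal.span _
  apply le_antisymm
  · rw [Ideal.span_le]
    rintro w (rfl | hw)
    · rw [SetLike.mem_coe, Ideal.mem_span_singleton]
      refine ⟨⟨_, memB _ h1⟩, Subtype.ext ?_⟩
      change x = (x + T ^ m * y) * ((f * g').eval T / H)
      rw [ez, hxe, eval_mul]; field_simp
    · rw [Set.mem_singleton_iff] at hw
      subst hw
      rw [SetLike.mem_coe, Ideal.mem_span_singleton]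
      refine ⟨⟨_, memB _ h2⟩, Subtype.ext ?_⟩
      change y = (x + T ^ m * y) * ((f' * g).eval T / H)
      rw [ez, hye, eval_mul]; field_simp
  · rw [Ideal.span_le, Set.singleton_subset_iff, SetLike.mem_coe, Ideal.mem_span_pair]
    exact ⟨1, ⟨T ^ m, B.pow_mem hTB m⟩, Subtype.ext (by simp)⟩

/-- chains in `S` have length at most `r` -/
def ChainLE (S : Set (Subring Om)) (r : ℕ) : Prop :=
  ∀ (l : ℕ) (c : Fin (l + 1) → Subring Om), StrictMono c → (∀ i, c i ∈ S) → l ≤ r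

/-- there is a chain in `S` of length `r` -/
def ChainGE (S : Set (Subring Om)) (r : ℕ) : Prop :=
  ∃ c : Fin (r + 1) → Subring Om, StrictMono c ∧ ∀ i, c i ∈ S

theorem ChainGE.mono {S S' : Set (Subring Om)} (h : S ⊆ S') {r : ℕ} (H : ChainGE S r) :
    ChainGE S' r := by
  obtain ⟨c, h1, h2⟩ := H
  exact ⟨c, h1, fun i => h (h2 i)⟩

/-- localization of `B` at `Q` inside the field -/
def locSub (B : Subring Om) (Q : Ideal B) [hQ : Q.IsPrime] : Subring Om where
  carrier := {x | ∃ a s : B, s ∉ Q ∧ x = a / s}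
  zero_mem' := ⟨0, 1, Q.ne_top_iff_one.1 hQ.ne_top, by simp⟩
  one_mem' := ⟨1, 1, Q.ne_top_iff_one.1 hQ.ne_top, by simp⟩
  add_mem' := by
    rintro _ _ ⟨a, s, hs, rfl⟩ ⟨b, t, ht, rfl⟩
    have hs0 : (s : Om) ≠ 0 := fun h => hs (by
      have h' := Subtype.ext (a2 := (0 : B)) h
      rw [h']; exact Q.zero_mem)
    have ht0 : (t : Om) ≠ 0 := fun h => ht (by
      have h' := Subtype.ext (a2 := (0 : B)) h
      rw [h']; exact Q.zero_mem)
    refine ⟨a * t + s * b, s * t, fun h => (hQ.mem_or_mem h).elim hs ht, ?_⟩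
    rw [div_add_div _ _ hs0 ht0]; simp
  neg_mem' := by
    rintro _ ⟨a, s, hs, rfl⟩
    exact ⟨-a, s, hs, by simp [neg_div]⟩
  mul_mem' := by
    rintro _ _ ⟨a, s, hs, rfl⟩ ⟨b, t, ht, rfl⟩
    refine ⟨a * b, s * t, fun h => (hQ.mem_or_mem h).elim hs ht, ?_⟩
    rw [div_mul_div_comm]; simp

theorem le_locSub (B : Subring Om) (Q : Ideal B) [hQ : Q.IsPrime] : B ≤ locSub B Q :=
  fun x hx => ⟨⟨x, hx⟩, 1, Q.ne_top_iff_one.1 hQ.ne_top, by simp⟩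

theorem locSub_anti (B : Subring Om) {Q Q' : Ideal B} [hQ : Q.IsPrime] [hQ' : Q'.IsPrime]
    (h : Q ≤ Q') : locSub B Q' ≤ locSub B Q := by
  rintro x ⟨a, s, hs, rfl⟩
  exact ⟨a, s, fun h' => hs (h h'), rfl⟩

theorem le_of_locSub (B : Subring Om) {Q Q' : Ideal B} [hQ : Q.IsPrime] [hQ' : Q'.IsPrime]
    (h : locSub B Q ≤ locSub B Q') : Q' ≤ Q := by
  intro x hx
  by_contra hc
  have hx0 : (x : Om) ≠ 0 := fun h => hc (by
      have h' := Subtype.ext (a2 := (0 : B)) h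
      rw [h']; exact Q.zero_mem)
  obtain ⟨a, s, hs, e⟩ := h (show (x : Om)⁻¹ ∈ locSub B Q from ⟨1, x, hc, by simp⟩)
  apply hs
  have hs0 : (s : Om) ≠ 0 := fun h => hs (by
      have h' := Subtype.ext (a2 := (0 : B)) h
      rw [h']; exact Q'.zero_mem)
  have : s = a * x := by
    apply Subtype.ext
    push_cast
    field_simp at e
    rw [mul_comm]; linear_combination e
  rw [this]
  exact Q'.mul_mem_left _ hx

section dims

variable {D : Set Om} {L : Subfield Om} {T : Om}

theorem loc_V (hT : Tr L T) {B : Subring Om} (hB : (B : Set Om) = KR D L T)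
    (Q : Ideal B) [hQ : Q.IsPrime] : ∀ x ∈ L, x ∈ locSub B Q ∨ x⁻¹ ∈ locSub B Q := by
  intro x hx
  obtain ⟨h0, h1, h2⟩ := y_mem (D := D) hx hT
  rw [← hB] at h1 h2
  have hTB : T ∈ B := by rw [← SetLike.mem_coe, hB]; exact T_mem_KR
  by_cases hb : (⟨_, h2⟩ : B) ∈ Q
  · right
    refine ⟨⟨_, h2⟩, ⟨_, h1⟩, ?_, ?_⟩
    · intro ha
      apply (Q.ne_top_iff_one.1 hQ.ne_top)
      have := Q.add_mem (Q.mul_mem_left ⟨T, hTB⟩ ha) hb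
      convert this
      apply Subtype.ext
      change (1 : Om) = T * (x / (1 + x * T)) + 1 / (1 + x * T)
      rw [← mul_div_assoc, ← add_div, eq_div_iff h0]
      ring
    · simp only
      by_cases hx0 : x = 0
      · simp [hx0]
      · field_simp
  · left
    refine ⟨⟨_, h1⟩, ⟨_, h2⟩, hb, ?_⟩
    simp only
    field_simp

theorem loc_inf_mem (hT : Tr L T) {B : Subring Om} (hB : (B : Set Om) = KR D L T) (hD : D ⊆ L)
    (Q : Ideal B) [hQ : Q.IsPrime] : locSub B Q ⊓ L.toSubring ∈ VO D L := by
  refine ⟨fun d hd => ⟨le_locSub B Q ?_, hD hd⟩, fun x hx => hx.2, fun x hx => ?_⟩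
  · rw [← SetLike.mem_coe, hB]; exact D_mem_KR hd
  · rcases loc_V hT hB Q x hx with h | h
    · exact Or.inl ⟨h, hx⟩
    · exact Or.inr ⟨h, L.inv_mem hx⟩

theorem loc_strict (hT : Tr L T) {B : Subring Om} (hB : (B : Set Om) = KR D L T) (hD : D ⊆ L)
    {Q Q' : Ideal B} [hQ : Q.IsPrime] [hQ' : Q'.IsPrime] (h : Q < Q') :
    locSub B Q' ⊓ L.toSubring < locSub B Q ⊓ L.toSubring := by
  refine lt_of_le_not_ge (inf_le_inf_right _ (locSub_anti B h.le)) fun hc => ?_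
  apply h.not_ge
  apply le_of_locSub
  have hBQ : KR D L T ⊆ locSub B Q' := by rw [← hB]; exact le_locSub B Q'
  intro x hx
  refine lemU' hBQ (loc_V hT hB Q') (locSub_anti B h.le) ?_ ?_ hx
  · intro y hy hy'
    exact (hc ⟨hy', hy⟩).1
  · obtain ⟨a, s, _, rfl⟩ := hx
    have : ∀ b : B, (b : Om) ∈ LT L T := fun b => KR_le hD (by rw [← hB]; exact b.2)
    exact div_mem (this a) (this s)

theorem dim_le (hT : Tr L T) {B : Subring Om} (hB : (B : Set Om) = KR D L T) (hD : D ⊆ L)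
    {r : ℕ} (H : ChainLE (VO D L) r) : ringKrullDim B ≤ r := by
  refine iSup_le fun p => ?_
  have := H p.length (fun i => locSub B (p (Fin.rev i)).asIdeal ⊓ L.toSubring) ?_ ?_
  · exact_mod_cast this
  · intro i j hij
    exact loc_strict hT hB hD (p.strictMono (Fin.rev_lt_rev.2 hij))
  · intro i
    exact loc_inf_mem hT hB hD _

/-- The center of `W(T)` on `B`. -/
def center (hT : Tr L T) {B : Subring Om} (hB : (B : Set Om) = KR D L T) {W : Subring Om}
    (hW : W ∈ VO D L) : Ideal B where
  carrier := {x | ∃ f ∈ MP W, ∃ g ∈ PS W, g ∉ MP W ∧ (x : Om) = f.eval T / g.eval T}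
  zero_mem' := ⟨0, fun i => by simpa using mm_zero W, 1, one_mem _, one_nMP W, by simp⟩
  add_mem' := by
    rintro x y ⟨f, hf, g, hg, hg0, hx⟩ ⟨f', hf', g', hg', hg0', hy⟩
    have hV := VO.isV hW
    have z : (0 : Om[X]) ∈ MP W := fun i => by simpa using mm_zero W
    have n1 : g.eval T ≠ 0 := hT.ne (PS_mono hV.1 hg) (by rintro rfl; exact hg0 z)
    have n2 : g'.eval T ≠ 0 := hT.ne (PS_mono hV.1 hg') (by rintro rfl; exact hg0' z)
    refine ⟨g' * f + g * f', MP_add hV (MP_mul hV hg' hf) (MP_mul hV hg hf'), g * g',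
      mul_mem hg hg', fun h => (MP_prime hV hg hg' h).elim hg0 hg0', ?_⟩
    push_cast
    rw [hx, hy, div_add_div _ _ n1 n2]; simp [mul_comm]
  smul_mem' := by
    rintro c x ⟨f, hf, g, hg, hg0, hx⟩
    have hV := VO.isV hW
    have hc : (c : Om) ∈ KR D L T := by rw [← hB]; exact c.2
    simp only [KR, Set.mem_iInter] at hc
    obtain ⟨f', hf', g', hg', hg0', hy⟩ := (mem_NG hV).1 (hc W hW)
    refine ⟨f' * f, MP_mul hV hf' hf, g' * g, mul_mem hg' hg,
      fun h => (MP_prime hV hg' hg h).elim hg0' hg0, ?_⟩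
    simp only [smul_eq_mul, Subring.coe_mul]
    rw [hx, hy, div_mul_div_comm]; simp

theorem cross (hT : Tr L T) {W : Subring Om} (hV : W ≤ L.toSubring) {f g f' g' : Om[X]}
    (hf : f ∈ PS W) (hg : g ∈ PS W) (hg0 : g ∉ MP W) (hf' : f' ∈ PS W) (hg' : g' ∈ PS W)
    (hg0' : g' ∉ MP W) (e : f.eval T / g.eval T = f'.eval T / g'.eval T) : f * g' = f' * g := by
  have z : (0 : Om[X]) ∈ MP W := fun i => by simpa using mm_zero W
  have n1 : g.eval T ≠ 0 := hT.ne (PS_mono hV hg) (by rintro rfl; exact hg0 z)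
  have n2 : g'.eval T ≠ 0 := hT.ne (PS_mono hV hg') (by rintro rfl; exact hg0' z)
  apply hT.inj (PS_mono hV (mul_mem hf hg')) (PS_mono hV (mul_mem hf' hg))
  simp only [eval_mul]
  exact (div_eq_div_iff n1 n2).1 e

theorem mem_center_iff (hT : Tr L T) {B : Subring Om} (hB : (B : Set Om) = KR D L T)
    {W : Subring Om} (hW : W ∈ VO D L) {x : B} {f g : Om[X]} (hf : f ∈ PS W) (hg : g ∈ PS W)
    (hg0 : g ∉ MP W) (e : (x : Om) = f.eval T / g.eval T) :
    x ∈ center hT hB hW ↔ f ∈ MP W := by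
  have hV := VO.isV hW
  constructor
  · rintro ⟨f', hf', g', hg', hg0', hx⟩
    have := cross hT hV.1 hf hg hg0 (MP_le hf') hg' hg0' (e ▸ hx)
    have h2 : f * g' ∈ MP W := by rw [this, mul_comm]; exact MP_mul hV hg hf'
    exact (MP_prime hV hf hg' h2).resolve_right hg0'
  · intro h
    exact ⟨f, h, g, hg, hg0, e⟩

theorem rep {B : Subring Om} (hB : (B : Set Om) = KR D L T)
    {W : Subring Om} (hW : W ∈ VO D L) (x : B) :
    ∃ f ∈ PS W, ∃ g ∈ PS W, g ∉ MP W ∧ (x : Om) = f.eval T / g.eval T := by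
  have hc : (x : Om) ∈ KR D L T := by rw [← hB]; exact x.2
  simp only [KR, Set.mem_iInter] at hc
  exact (mem_NG (VO.isV hW)).1 (hc W hW)

theorem center_prime (hT : Tr L T) {B : Subring Om} (hB : (B : Set Om) = KR D L T)
    {W : Subring Om} (hW : W ∈ VO D L) : (center hT hB hW).IsPrime := by
  have hV := VO.isV hW
  refine ⟨?_, ?_⟩
  · rw [Ideal.ne_top_iff_one, mem_center_iff hT hB hW (one_mem _) (one_mem _) (one_nMP W)
      (by simp)]
    exact one_nMP W
  · intro x y h
    obtain ⟨f, hf, g, hg, hg0, hx⟩ := rep hB hW x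
    obtain ⟨f', hf', g', hg', hg0', hy⟩ := rep hB hW y
    rw [mem_center_iff hT hB hW (mul_mem hf hf') (mul_mem hg hg')
      (fun h => (MP_prime hV hg hg' h).elim hg0 hg0')
      (by push_cast; rw [hx, hy, div_mul_div_comm]; simp)] at h
    rw [mem_center_iff hT hB hW hf hg hg0 hx, mem_center_iff hT hB hW hf' hg' hg0' hy]
    exact MP_prime hV hf hf' h

theorem mm_anti {W W' : Subring Om} (h : W ≤ W') (hV : IsV W L) (hV' : IsV W' L) {x : Om}
    (hx : x ∈ mm W') : x ∈ mm W := by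
  rcases hx.2 with rfl | h1
  · exact mm_zero W
  · rcases hV.2 x (hV'.1 hx.1) with h2 | h2
    · exact ⟨h2, Or.inr fun h3 => h1 (h h3)⟩
    · exact absurd (h h2) h1

theorem center_strict (hT : Tr L T) {B : Subring Om} (hB : (B : Set Om) = KR D L T)
    {W W' : Subring Om} (hW : W ∈ VO D L) (hW' : W' ∈ VO D L) (h : W < W') :
    center hT hB hW' < center hT hB hW := by
  have hV := VO.isV hW
  have hV' := VO.isV hW'
  refine lt_of_le_not_ge ?_ ?_
  · intro x hx
    obtain ⟨f, hf, g, hg, hg0, e⟩ := rep hB hW x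
    rw [mem_center_iff hT hB hW' (PS_mono h.le hf) (PS_mono h.le hg)
      (fun h' => hg0 fun i => mm_anti h.le hV hV' (h' i)) e] at hx
    rw [mem_center_iff hT hB hW hf hg hg0 e]
    exact fun i => mm_anti h.le hV hV' (hx i)
  · intro hle
    obtain ⟨y, hy', hyW⟩ := SetLike.exists_of_lt h
    have hyL : y ∈ L := hV'.1 hy'
    have hy1 : y⁻¹ ∈ W := (hV.2 y hyL).resolve_left hyW
    obtain ⟨h0, h1, -⟩ := y_mem (D := D) (L.inv_mem hyL) hT
    rw [← hB] at h1
    have hf : C y⁻¹ ∈ PS W := C_mem_PS hy1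
    have hg : (1 + C y⁻¹ * X : Om[X]) ∈ PS W :=
      add_mem (one_mem _) (mul_mem hf (X_mem_PS _))
    have c0 : (1 + C y⁻¹ * X : Om[X]).coeff 0 = 1 := by simp
    have e : y⁻¹ / (1 + y⁻¹ * T) = (C y⁻¹).eval T / (1 + C y⁻¹ * X : Om[X]).eval T := by simp
    have a : (⟨_, h1⟩ : B) ∈ center hT hB hW := by
      rw [mem_center_iff hT hB hW hf hg (fun h => mm_one W (c0 ▸ h 0)) e]
      intro i
      rw [coeff_C]
      split_ifs
      · exact ⟨hy1, Or.inr (by rwa [inv_inv])⟩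
      · exact mm_zero W
    have b := hle a
    rw [mem_center_iff hT hB hW' (PS_mono h.le hf) (PS_mono h.le hg)
      (fun h => mm_one W' (c0 ▸ h 0)) e] at b
    have b0 := b 0
    rw [coeff_C_zero] at b0
    rcases b0.2 with h3 | h3
    · rw [inv_eq_zero] at h3
      exact hyW (h3 ▸ W.zero_mem)
    · rw [inv_inv] at h3; exact h3 hy'

theorem dim_ge (hT : Tr L T) {B : Subring Om} (hB : (B : Set Om) = KR D L T)
    {r : ℕ} (H : ChainGE (VO D L) r) : (r : WithBot ℕ∞) ≤ ringKrullDim B := by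
  obtain ⟨c, hc, hS⟩ := H
  let p : LTSeries (PrimeSpectrum B) :=
    { length := r
      toFun := fun i => ⟨center hT hB (hS (Fin.rev i)), center_prime hT hB _⟩
      step := fun i => center_strict hT hB (hS _) (hS _) (hc (Fin.rev_lt_rev.2 (Fin.castSucc_lt_succ))) }
  exact Order.LTSeries.length_le_krullDim p

end dims
theorem KR_mul {D : Set Om} {L : Subfield Om} {T x y : Om} (hx : x ∈ KR D L T)
    (hy : y ∈ KR D L T) : x * y ∈ KR D L T := by
  simp only [KR, Set.mem_iInter] at *
  intro W hW
  have hV := VO.isV hW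
  obtain ⟨f, hf, g, hg, hg0, rfl⟩ := (mem_NG hV).1 (hx W hW)
  obtain ⟨f', hf', g', hg', hg0', rfl⟩ := (mem_NG hV).1 (hy W hW)
  rw [mem_NG hV]
  exact ⟨f * f', mul_mem hf hf', g * g', mul_mem hg hg',
    fun h => (MP_prime hV hg hg' h).elim hg0 hg0', by rw [div_mul_div_comm]; simp⟩

theorem KR_pow {D : Set Om} {L : Subfield Om} {T x : Om} (hx : x ∈ KR D L T) {m : ℕ}
    (hm : m ≠ 0) : x ^ m ∈ KR D L T := by
  induction m with
  | zero => exact absurd rfl hm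
  | succ m ih =>
    by_cases h : m = 0
    · subst h; simpa using hx
    · rw [pow_succ]; exact KR_mul (ih h) hx

theorem key {D : Set Om} {L : Subfield Om} {T : Om} (hT : Tr L T) (hD : D ⊆ L) {A : Subring Om}
    (hAK : A ≤ (LT L T).toSubring) (hu : T⁻¹ ∈ A) (hA : ∀ x ∈ LT L T, ∃ m : ℕ, T⁻¹ ^ m * x ∈ A)
    (hJ : ∀ a ∈ A, (1 + T⁻¹ * a)⁻¹ ∈ A) {W : Subring Om}
    (hW : W ∈ VO (KR D L T ∩ A) (LT L T)) : KR D L T ⊆ W ∨ A ≤ W := by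
  have T0 : T ≠ 0 := by
    have := hT.ne (X_mem_PS _) X_ne_zero
    simpa using this
  have huW : T⁻¹ ∈ W := hW.1 ⟨Tinv_mem_KR, hu⟩
  by_cases hTW : T ∈ W
  · left
    intro b hb
    obtain ⟨m, hm⟩ := hA b (KR_le hD hb)
    have h1 : T⁻¹ ^ (m + 1) * b ∈ W := by
      refine hW.1 ⟨KR_mul (KR_pow Tinv_mem_KR (Nat.succ_ne_zero m)) hb, ?_⟩
      rw [pow_succ', mul_assoc]
      exact A.mul_mem hu hm
    have h2 := W.mul_mem (W.pow_mem hTW (m + 1)) h1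
    have e : T ^ (m + 1) * (T⁻¹ ^ (m + 1) * b) = b := by
      rw [← mul_assoc, ← mul_pow, mul_inv_cancel₀ T0]; simp
    rwa [e] at h2
  · right
    intro a ha
    have um : T⁻¹ ∈ mm W := ⟨huW, Or.inr (by rwa [inv_inv])⟩
    obtain ⟨f, hf, g, hg, g0, e⟩ := mem_LT (hAK ha)
    have gne : g ≠ 0 := by rintro rfl; simp at g0
    set n := f.natDegree with hn
    obtain ⟨h0, h1, h2⟩ := fg_mem (D := D) (T := T) hf hg gne (n + 1) (Nat.lt_succ_self _)
    have hh : (f + X ^ (n + 1) * g).eval T ≠ 0 :=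
      hT.ne (add_mem hf (mul_mem (pow_mem (X_mem_PS _) _) hg)) h0
    set H := (f + X ^ (n + 1) * g).eval T with hH
    have hH' : H = f.eval T + T ^ (n + 1) * g.eval T := by simp [hH]
    have TK : T ^ (n + 1) ∈ KR D L T := KR_pow T_mem_KR (Nat.succ_ne_zero n)
    have es : (1 + T⁻¹ * (T⁻¹ ^ n * a))⁻¹ = T ^ (n + 1) * (g.eval T / H) := by
      rw [← mul_assoc, ← pow_succ', e]
      have : (1 + T⁻¹ ^ (n + 1) * (f.eval T / g.eval T)) = H / (T ^ (n + 1) * g.eval T) := by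
        rw [hH', inv_pow]; field_simp; ring
      rw [this, inv_div, mul_div_assoc]
    have sA : T ^ (n + 1) * (g.eval T / H) ∈ A := by
      rw [← es]; exact hJ _ (A.mul_mem (A.pow_mem hu n) ha)
    have sW : T ^ (n + 1) * (g.eval T / H) ∈ W := hW.1 ⟨KR_mul TK h2, sA⟩
    have ea : T ^ (n + 1) * (g.eval T / H) * a = T ^ (n + 1) * (f.eval T / H) := by
      rw [e]; field_simp
    have saW : T ^ (n + 1) * (f.eval T / H) ∈ W := by
      refine hW.1 ⟨KR_mul TK h1, ?_⟩
      rw [← ea]; exact A.mul_mem sA ha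
    have hV := VO.isV hW
    have sum : T ^ (n + 1) * (g.eval T / H) + T⁻¹ ^ n * (T ^ (n + 1) * (f.eval T / H)) * T⁻¹ = 1 := by
      have : T⁻¹ ^ n * (T ^ (n + 1) * (f.eval T / H)) * T⁻¹ = f.eval T / H := by
        rw [inv_pow]; field_simp; ring
      rw [this, ← mul_div_assoc, ← add_div, div_eq_one_iff_eq hh, hH']; ring
    have snm : T ^ (n + 1) * (g.eval T / H) ∉ mm W := by
      intro hs
      apply mm_one W
      rw [← sum]
      exact mm_add hV hs (mm_mul (W.mul_mem (W.pow_mem huW n) saW) um)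
    obtain ⟨s0, sI⟩ := mm_inv sW snm
    have := W.mul_mem sI saW
    rwa [← ea, ← mul_assoc, inv_mul_cancel₀ s0, one_mul] at this

theorem step_le {D : Set Om} {L : Subfield Om} {T : Om} (hT : Tr L T) (hD : D ⊆ L) {A : Subring Om}
    (hAK : A ≤ (LT L T).toSubring) (hu : T⁻¹ ∈ A) (hA : ∀ x ∈ LT L T, ∃ m : ℕ, T⁻¹ ^ m * x ∈ A)
    (hJ : ∀ a ∈ A, (1 + T⁻¹ * a)⁻¹ ∈ A) {r : ℕ} (H1 : ChainLE (VO D L) r)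
    (H2 : ChainLE (VO (A : Set Om) (LT L T)) r) :
    ChainLE (VO (KR D L T ∩ A) (LT L T)) r := by
  intro l c hc hS
  have h0 : ∀ i, c 0 ≤ c i := fun i => hc.monotone (Fin.zero_le i)
  rcases key hT hD hAK hu hA hJ (hS 0) with h | h
  · refine H1 l (fun i => c i ⊓ L.toSubring) ?_ ?_
    · intro i j hij
      refine lt_of_le_not_ge (inf_le_inf_right _ (hc hij).le) fun hle => ?_
      apply (hc hij).not_ge
      intro x hx
      refine lemU' (R := c i) (R' := c j) (fun y hy => h0 i (h hy))
        (fun y hy => (hS i).2.2 y (L_le_LT _ _ hy)) (hc hij).le ?_ ((hS j).2.1 hx) hx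
      intro y hy hy'
      exact (hle ⟨hy', hy⟩).1
    · intro i
      refine ⟨fun d hd => ⟨h0 i (h (D_mem_KR hd)), hD hd⟩, fun x hx => hx.2, fun x hx => ?_⟩
      rcases (hS i).2.2 x (L_le_LT _ _ hx) with h | h
      · exact Or.inl ⟨h, hx⟩
      · exact Or.inr ⟨h, L.inv_mem hx⟩
  · exact H2 l c hc fun i => ⟨fun a ha => h0 i (h ha), (hS i).2⟩

section compo

variable {E : Subfield Om} {t : Om}

/-- Composite ring. -/
def comp (ht : Tr E t) (k : Subring Om) : Subring Om where
  carrier := {x | ∃ f ∈ PS E.toSubring, ∃ g ∈ PS E.toSubring, g.coeff 0 ≠ 0 ∧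
    f.coeff 0 / g.coeff 0 ∈ k ∧ x = f.eval t / g.eval t}
  zero_mem' := ⟨0, zero_mem _, 1, one_mem _, by simp, by simp [k.zero_mem], by simp⟩
  one_mem' := ⟨1, one_mem _, 1, one_mem _, by simp, by simp [k.one_mem], by simp⟩
  add_mem' := by
    rintro _ _ ⟨f, hf, g, hg, g0, h, rfl⟩ ⟨f', hf', g', hg', g0', h', rfl⟩
    have n1 : g.eval t ≠ 0 := ht.ne hg (by rintro rfl; simp at g0)
    have n2 : g'.eval t ≠ 0 := ht.ne hg' (by rintro rfl; simp at g0')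
    refine ⟨f * g' + g * f', add_mem (mul_mem hf hg') (mul_mem hg hf'), g * g', mul_mem hg hg',
      by simp [mul_coeff_zero, g0, g0'], ?_, by rw [div_add_div _ _ n1 n2]; simp⟩
    simp only [coeff_add, mul_coeff_zero]
    rw [← div_add_div _ _ g0 g0']
    exact k.add_mem h h'
  neg_mem' := by
    rintro _ ⟨f, hf, g, hg, g0, h, rfl⟩
    exact ⟨-f, neg_mem hf, g, hg, g0, by simpa [neg_div] using h, by simp [neg_div]⟩
  mul_mem' := by
    rintro _ _ ⟨f, hf, g, hg, g0, h, rfl⟩ ⟨f', hf', g', hg', g0', h', rfl⟩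
    refine ⟨f * f', mul_mem hf hf', g * g', mul_mem hg hg',
      by simp [mul_coeff_zero, g0, g0'], ?_, by rw [div_mul_div_comm]; simp⟩
    simp only [mul_coeff_zero]
    rw [← div_mul_div_comm]
    exact k.mul_mem h h'

theorem mem_comp_iff (ht : Tr E t) {k : Subring Om} {f g : Om[X]} (hf : f ∈ PS E.toSubring)
    (hg : g ∈ PS E.toSubring) (g0 : g.coeff 0 ≠ 0) :
    f.eval t / g.eval t ∈ comp ht k ↔ f.coeff 0 / g.coeff 0 ∈ k := by
  constructor
  · rintro ⟨f', hf', g', hg', g0', h', e⟩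
    have n1 : g.eval t ≠ 0 := ht.ne hg (by rintro rfl; simp at g0)
    have n2 : g'.eval t ≠ 0 := ht.ne hg' (by rintro rfl; simp at g0')
    have := ht.inj (mul_mem hf hg') (mul_mem hf' hg) (by
      simp only [eval_mul]; exact (div_eq_div_iff n1 n2).1 e)
    have h2 := congrArg (fun p => coeff p 0) this
    simp only [mul_coeff_zero] at h2
    rwa [(div_eq_div_iff g0 g0').2 h2]
  · intro h
    exact ⟨f, hf, g, hg, g0, h, rfl⟩

theorem comp_mono (ht : Tr E t) {k k' : Subring Om} (h : k ≤ k') : comp ht k ≤ comp ht k' := by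
  rintro _ ⟨f, hf, g, hg, g0, h', rfl⟩
  exact ⟨f, hf, g, hg, g0, h h', rfl⟩

theorem mem_comp_E (ht : Tr E t) {k : Subring Om} {x : Om} (hx : x ∈ E) :
    x ∈ comp ht k ↔ x ∈ k := by
  have := mem_comp_iff ht (k := k) (f := C x) (g := 1) (C_mem_PS hx) (one_mem _) (by simp)
  simpa using this

theorem comp_strict (ht : Tr E t) {k k' : Subring Om} (hk : k' ≤ E.toSubring) (h : k < k') :
    comp ht k < comp ht k' := by
  refine lt_of_le_not_ge (comp_mono ht h.le) fun hle => h.not_ge fun x hx => ?_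
  exact (mem_comp_E ht (hk hx)).1 (hle ((mem_comp_E ht (hk hx)).2 hx))

theorem le_comp (ht : Tr E t) {k : Subring Om} (hk : k ≤ E.toSubring) : k ≤ comp ht k :=
  fun _ hx => (mem_comp_E ht (hk hx)).2 hx

theorem comp_le (ht : Tr E t) (k : Subring Om) : comp ht k ≤ (LT E t).toSubring := by
  rintro _ ⟨f, hf, g, hg, g0, h', rfl⟩
  exact (LT E t).div_mem (eval_mem_LT hf) (eval_mem_LT hg)

theorem Tr.t0 (ht : Tr E t) : t ≠ 0 := by
  have := ht.ne (X_mem_PS _) X_ne_zero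
  simpa using this

theorem tinv_nmem (ht : Tr E t) (k : Subring Om) : t⁻¹ ∉ comp ht k := by
  rintro ⟨f, hf, g, hg, g0, h', e⟩
  have n1 : g.eval t ≠ 0 := ht.ne hg (by rintro rfl; simp at g0)
  have t0 := ht.t0
  have : g = X * f := ht.inj hg (mul_mem (X_mem_PS _) hf) (by
    simp only [eval_mul, eval_X]
    field_simp at e
    exact e)
  apply g0
  rw [this]; simp

theorem comp_lt (ht : Tr E t) (k : Subring Om) : comp ht k < (LT E t).toSubring :=
  lt_of_le_not_ge (comp_le ht k) fun h => tinv_nmem ht k (h ((LT E t).inv_mem (T_mem_LT E t)))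

theorem split_X {S : Subring Om} {f : Om[X]} (hf : f ∈ PS S) (h0 : f ≠ 0) :
    ∃ (m : ℕ) (f' : Om[X]), f' ∈ PS S ∧ f'.coeff 0 ≠ 0 ∧ f = X ^ m * f' := by
  have : X ^ f.natTrailingDegree ∣ f := by
    rw [X_pow_dvd_iff]
    intro d hd
    exact coeff_eq_zero_of_lt_natTrailingDegree hd
  obtain ⟨f', e⟩ := this
  have hc : ∀ i, f'.coeff i = f.coeff (i + f.natTrailingDegree) := fun i => by
    have h := congrArg (fun p => coeff p (i + f.natTrailingDegree)) e
    rw [h, coeff_X_pow_mul]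
  refine ⟨_, f', fun i => by rw [hc]; exact hf _, ?_, e⟩
  rw [hc, zero_add]
  exact trailingCoeff_nonzero_iff_nonzero.2 h0

theorem comp_isV (ht : Tr E t) {k : Subring Om} (hk : IsV k E) :
    IsV (comp ht k) (LT E t) := by
  refine ⟨comp_le ht k, fun x hx => ?_⟩
  obtain ⟨f, hf, g, hg, g0, rfl⟩ := mem_LT hx
  by_cases f0 : f = 0
  · left; simp [f0, (comp ht k).zero_mem]
  obtain ⟨m, f', hf', f0', rfl⟩ := split_X hf f0
  obtain ⟨n, g', hg', g0', rfl⟩ := split_X hg (by rintro rfl; simp at g0)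
  have t0 := ht.t0
  have n1 : g'.eval t ≠ 0 := ht.ne hg' (by rintro rfl; simp at g0')
  have n2 : f'.eval t ≠ 0 := ht.ne hf' (by rintro rfl; simp at f0')
  have main : ∀ (a b : ℕ) (p q : Om[X]), p ∈ PS E.toSubring → q ∈ PS E.toSubring →
      q.coeff 0 ≠ 0 → b < a → (X ^ a * p).eval t / (X ^ b * q).eval t ∈ comp ht k := by
    intro a b p q hp hq q0 hab
    obtain ⟨d, rfl⟩ := Nat.exists_eq_add_of_lt hab
    refine ⟨X ^ (d + 1) * p, mul_mem (pow_mem (X_mem_PS _) _) hp, q, hq, q0, ?_, ?_⟩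
    · simp [k.zero_mem]
    · simp only [eval_mul, eval_pow, eval_X]
      rw [show b + d + 1 = b + (d + 1) by ring, pow_add, mul_assoc,
        mul_div_mul_left _ _ (pow_ne_zero _ t0)]
  rcases lt_trichotomy m n with h | h | h
  · right; rw [inv_div]; exact main _ _ _ _ hg' hf' f0' h
  · subst h
    simp only [eval_mul, eval_pow, eval_X]
    rw [mul_div_mul_left _ _ (pow_ne_zero _ t0), inv_div, mem_comp_iff ht hf' hg' g0',
      mem_comp_iff ht hg' hf' f0', ← inv_div (f'.coeff 0)]
    exact hk.2 _ (div_mem (hf' 0) (hg' 0))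
  · left; exact main _ _ _ _ hf' hg' g0' h

theorem chain_ge (ht : Tr E t) {k : Subring Om} {l : ℕ} (H : ChainGE (VO (k : Set Om) E) l) :
    ChainGE (VO (comp ht k : Set Om) (LT E t)) (l + 1) := by
  obtain ⟨c, hc, hS⟩ := H
  refine ⟨Fin.snoc (α := fun _ => Subring Om) (fun i => comp ht (c i)) (LT E t).toSubring, ?_, ?_⟩
  · intro i j hij
    induction j using Fin.lastCases with
    | last =>
      induction i using Fin.lastCases with
      | last => exact absurd hij (lt_irrefl _)
      | cast i => simpa using comp_lt ht (c i)
    | cast j =>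
      induction i using Fin.lastCases with
      | last => exact absurd hij (not_lt.2 (Fin.le_last _))
      | cast i =>
        simp only [Fin.snoc_castSucc]
        exact comp_strict ht (hS j).2.1 (hc (Fin.castSucc_lt_castSucc_iff.1 hij))
  · intro i
    induction i using Fin.lastCases with
    | last =>
      simp only [Fin.snoc_last]
      exact self_VO (comp_le ht k)
    | cast i =>
      simp only [Fin.snoc_castSucc]
      have := comp_isV ht (VO.isV (hS i))
      exact ⟨comp_mono ht (hS i).1, this.1, this.2⟩

theorem comp_abs (ht : Tr E t) (k : Subring Om) {x : Om} (hx : x ∈ LT E t) {z : Om} (hz : z ∈ E) :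
    ∃ m : ℕ, (t / (1 + t * z)) ^ m * x ∈ comp ht k := by
  obtain ⟨f, hf, g, hg, g0, rfl⟩ := mem_LT hx
  obtain ⟨n, g', hg', g0', rfl⟩ := split_X hg (by rintro rfl; simp at g0)
  refine ⟨n + 1, X * f, mul_mem (X_mem_PS _) hf, (1 + X * C z) ^ (n + 1) * g',
    mul_mem (pow_mem (add_mem (one_mem _) (mul_mem (X_mem_PS _) (C_mem_PS hz))) _) hg', ?_, ?_, ?_⟩
  · simpa [mul_coeff_zero, coeff_zero_eq_eval_zero] using g0'
  · simp [k.zero_mem]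
  · have t0 := ht.t0
    simp only [eval_mul, eval_pow, eval_X, eval_add, eval_one, eval_C]
    rw [div_pow, div_mul_div_comm, pow_succ t n, mul_assoc, mul_left_comm _ (t ^ n) _,
      mul_div_mul_left _ _ (pow_ne_zero _ t0)]

theorem comp_u (ht : Tr E t) (k : Subring Om) {z : Om} (hz : z ∈ E) :
    t / (1 + t * z) ∈ comp ht k := by
  refine ⟨X, X_mem_PS _, 1 + X * C z,
    add_mem (one_mem _) (mul_mem (X_mem_PS _) (C_mem_PS hz)), by simp, by simp [k.zero_mem], ?_⟩
  simp only [eval_mul, eval_X, eval_add, eval_one, eval_C]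

theorem comp_jac (ht : Tr E t) (k : Subring Om) {z : Om} (hz : z ∈ E) {a : Om}
    (ha : a ∈ comp ht k) : (1 + t / (1 + t * z) * a)⁻¹ ∈ comp ht k := by
  obtain ⟨f, hf, g, hg, g0, h', rfl⟩ := ha
  have hq : (1 + X * C z : Om[X]) ∈ PS E.toSubring :=
    add_mem (one_mem _) (mul_mem (X_mem_PS _) (C_mem_PS hz))
  have q0 : (1 + X * C z : Om[X]).coeff 0 = 1 := by simp
  have n1 : g.eval t ≠ 0 := ht.ne hg (by rintro rfl; simp at g0)
  have n2 : (1 + X * C z : Om[X]).eval t ≠ 0 := ht.ne hq (by intro h; rw [h] at q0; simp at q0)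
  refine ⟨(1 + X * C z) * g, mul_mem hq hg, (1 + X * C z) * g + X * f,
    add_mem (mul_mem hq hg) (mul_mem (X_mem_PS _) hf), ?_, ?_, ?_⟩
  · simpa [mul_coeff_zero] using g0
  · simp [mul_coeff_zero, g0, k.one_mem]
  · simp only [eval_mul, eval_X, eval_add, eval_one, eval_C] at n2 ⊢
    rw [← inv_div ((1 + t * z) * g.eval t + _), add_div, div_self (mul_ne_zero n2 n1), div_mul_div_comm]

end compo
section algind

theorem mon_cmp {K : Subfield Om} {l : ℕ} {c : Fin (l + 1) → Subring Om} (hc : StrictMono c)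
    (hS : ∀ i, IsV (c i) K) {z : Fin l → Om} (hz : ∀ i, z i ∈ mm (c i.castSucc))
    (hz0 : ∀ i, z i ≠ 0) (hz' : ∀ i, (z i)⁻¹ ∈ c i.succ) {a b : Fin l → ℕ} {i : Fin l}
    (hi : b i < a i) (hj : ∀ j, i < j → a j = b j) :
    (∏ j, z j ^ a j) / (∏ j, z j ^ b j) ∈ mm (c 0) := by
  refine mm_anti (hc.monotone (Fin.zero_le i.castSucc)) (hS _) (hS _) ?_
  rw [← Finset.prod_div_distrib, ← Finset.prod_erase_mul _ _ (Finset.mem_univ i)]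
  have hzi : z i ^ a i / z i ^ b i ∈ mm (c i.castSucc) := by
    obtain ⟨d, hd⟩ := Nat.exists_eq_add_of_lt hi
    rw [hd, add_assoc, pow_add, mul_div_cancel_left₀ _ (pow_ne_zero _ (hz0 i)), pow_succ]
    exact mm_mul (Subring.pow_mem _ (hz i).1 _) (hz i)
  refine mm_mul (Subring.prod_mem _ fun j hj' => ?_) hzi
  rcases lt_trichotomy j i with h | h | h
  · have h1 : c j.succ ≤ c i.castSucc := hc.monotone (by
      rw [Fin.le_def]; simpa using Nat.succ_le_of_lt (Fin.lt_def.1 h))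
    have h2 : c j.castSucc ≤ c i.castSucc := (hc (Fin.castSucc_lt_succ)).le.trans h1
    rw [div_eq_mul_inv, ← inv_pow]
    exact Subring.mul_mem _ (Subring.pow_mem _ (h2 (hz j).1) _) (Subring.pow_mem _ (h1 (hz' j)) _)
  · exact absurd h (Finset.ne_of_mem_erase hj')
  · rw [hj j h, div_self (pow_ne_zero _ (hz0 j))]
    exact Subring.one_mem _

theorem mon_cmp' {K : Subfield Om} {l : ℕ} {c : Fin (l + 1) → Subring Om} (hc : StrictMono c)
    (hS : ∀ i, IsV (c i) K) {z : Fin l → Om} (hz : ∀ i, z i ∈ mm (c i.castSucc))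
    (hz0 : ∀ i, z i ≠ 0) (hz' : ∀ i, (z i)⁻¹ ∈ c i.succ) {a b : Fin l → ℕ} (hab : a ≠ b) :
    (∏ j, z j ^ a j) / (∏ j, z j ^ b j) ∈ mm (c 0) ∨
      (∏ j, z j ^ b j) / (∏ j, z j ^ a j) ∈ mm (c 0) := by
  classical
  have hne : (Finset.univ.filter fun j => a j ≠ b j).Nonempty := by
    obtain ⟨j, hj⟩ := Function.ne_iff.1 hab
    exact ⟨j, by simpa using hj⟩
  obtain ⟨i, hi, hm⟩ := Finset.exists_max_image _ id hne
  have hj : ∀ j, i < j → a j = b j := by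
    intro j hij
    by_contra hc
    exact absurd (hm j (by simpa using hc)) (not_le.2 hij)
  have hi' : a i ≠ b i := by simpa using hi
  rcases lt_or_gt_of_ne hi' with h | h
  · exact Or.inr (mon_cmp hc hS hz hz0 hz' h fun j h => (hj j h).symm)
  · exact Or.inl (mon_cmp hc hS hz hz0 hz' h hj)

theorem algInd {k K : Subfield Om} (hk : k ≤ K) {l : ℕ} {c : Fin (l + 1) → Subring Om}
    (hc : StrictMono c) (hS : ∀ i, c i ∈ VO (k : Set Om) K) :
    ∃ z : Fin l → Om, (∀ i, z i ∈ K) ∧ AlgebraicIndependent k z := by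
  classical
  have hV := fun i => VO.isV (hS i)
  have : ∀ i : Fin l, ∃ z : Om, z ≠ 0 ∧ z ∈ mm (c i.castSucc) ∧ z⁻¹ ∈ c i.succ := by
    intro i
    obtain ⟨y, hy, hy'⟩ := SetLike.exists_of_lt (hc (Fin.castSucc_lt_succ (i := i)))
    have hy0 : y ≠ 0 := by rintro rfl; exact hy' (Subring.zero_mem _)
    refine ⟨y⁻¹, inv_ne_zero hy0, ⟨((hV _).2 y ((hV _).1 hy)).resolve_left hy', ?_⟩, ?_⟩
    · rw [inv_inv]; exact Or.inr hy'
    · rwa [inv_inv]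
  choose z hz0 hz hz' using this
  refine ⟨z, fun i => (hV _).1 (hz i).1, ?_⟩
  rw [algebraicIndependent_iff]
  intro p hp
  by_contra hp0
  let mon : (Fin l →₀ ℕ) → Om := fun a => ∏ j, z j ^ a j
  have hmon : ∀ a, mon a ≠ 0 := fun a => Finset.prod_ne_zero_iff.2 fun j _ => pow_ne_zero _ (hz0 j)
  let term : (Fin l →₀ ℕ) → Om := fun a => ((p.coeff a : k) : Om) * mon a
  have hsum : ∑ a ∈ p.support, term a = 0 := by
    rw [MvPolynomial.aeval_def, MvPolynomial.eval₂_eq'] at hp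
    exact hp
  have hco : ∀ a ∈ p.support, ((p.coeff a : k) : Om) ≠ 0 := fun a ha h => by
    rw [MvPolynomial.mem_support_iff] at ha
    exact ha (Subtype.ext h)
  have hmK : ∀ a, mon a ∈ K := fun a =>
    K.prod_mem fun j _ => K.pow_mem ((hV _).1 (hz j).1) _
  obtain ⟨a, ha, hdom⟩ := exists_dom (hV 0) p.support (MvPolynomial.support_nonempty.2 hp0) term
    (fun a _ => K.mul_mem (hk (p.coeff a).2) (hmK a)) (fun a ha => mul_ne_zero (hco a ha) (hmon a))
  have ta : term a ≠ 0 := mul_ne_zero (hco a ha) (hmon a)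
  have hb : ∀ b ∈ p.support.erase a, term b / term a ∈ mm (c 0) := by
    intro b hb
    obtain ⟨hba, hbs⟩ := Finset.mem_erase.1 hb
    have cu : ∀ x y : k, ((x : Om) / y) ∈ c 0 := fun x y => (hS 0).1 (k.div_mem x.2 y.2)
    rcases mon_cmp' hc hV hz hz0 hz' (a := b) (b := a)
      (fun h => hba (DFunLike.coe_injective h)) with h | h
    · have := mm_mul (cu (p.coeff b) (p.coeff a)) h
      rwa [div_mul_div_comm] at this
    · exfalso
      apply mm_one (c 0)
      have h2 := mm_mul (hdom b hbs) (mm_mul (cu (p.coeff a) (p.coeff b)) h)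
      rw [div_mul_div_comm] at h2
      have tb : term b ≠ 0 := mul_ne_zero (hco b hbs) (hmon b)
      have e : term b / term a * (term a / term b) = 1 := by field_simp
      exact e ▸ h2
  have h1 := mm_sum (hV 0) _ _ hb
  rw [← Finset.sum_div] at h1
  rw [← Finset.sum_erase_add _ _ ha, ← eq_neg_iff_add_eq_zero] at hsum
  rw [hsum, neg_div, div_self ta] at h1
  apply mm_one (c 0)
  have h2 := mm_mul ((c 0).neg_mem (c 0).one_mem) h1
  simpa using h2

end algind
section tr

theorem chain_le_card {k : Subfield Om} {ι : Type} [Fintype ι] (s : ι → Om) {K : Subfield Om}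
    (hK : K = Subfield.closure ((k : Set Om) ∪ Set.range s)) :
    ChainLE (VO (k : Set Om) K) (Fintype.card ι) := by
  intro l c hc hS
  have hk : k ≤ K := by
    rw [hK]; exact fun x hx => Subfield.subset_closure (Or.inl hx)
  obtain ⟨z, hzK, hz⟩ := algInd hk hc hS
  let K' := IntermediateField.adjoin k (Set.range s)
  have hKK : K = K'.toSubfield := by
    rw [hK]
    change _ = Subfield.closure (Set.range (algebraMap k Om) ∪ Set.range s)
    congr 2
    exact Subtype.range_coe.symm
  have hzK' : ∀ i, z i ∈ K' := fun i => by
    have := hzK i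
    rw [hKK] at this
    exact this
  let z' : Fin l → K' := fun i => ⟨z i, hzK' i⟩
  have hz' : AlgebraicIndependent k z' := by
    apply AlgebraicIndependent.of_comp K'.val
    exact hz
  let s' : ι → K' := fun i => ⟨s i, IntermediateField.subset_adjoin k _ ⟨i, rfl⟩⟩
  have hmap : (Algebra.adjoin k (Set.range s')).map K'.val = Algebra.adjoin k (Set.range s) := by
    rw [AlgHom.map_adjoin, ← Set.range_comp]
    rfl
  have alg : Algebra.IsAlgebraic (Algebra.adjoin k (Set.range s')) K' := by
    refine ⟨fun x => ?_⟩
    obtain ⟨a, ha, b, hb, e⟩ := IntermediateField.mem_adjoin_iff_div.1 x.2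
    rw [← hmap] at ha hb
    obtain ⟨a, ha, rfl⟩ := ha
    obtain ⟨b, hb, rfl⟩ := hb
    have e' : x = a * b⁻¹ := by
      apply Subtype.ext
      rw [e, div_eq_mul_inv]; rfl
    rw [e']
    have h1 : IsAlgebraic (Algebra.adjoin k (Set.range s')) a :=
      isAlgebraic_algebraMap (⟨a, ha⟩ : Algebra.adjoin k (Set.range s'))
    have h2 : IsAlgebraic (Algebra.adjoin k (Set.range s')) b :=
      isAlgebraic_algebraMap (⟨b, hb⟩ : Algebra.adjoin k (Set.range s'))
    exact h1.mul h2.inv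
  have h1 := hz'.lift_cardinalMk_le_trdeg
  have h2 := Algebra.IsAlgebraic.trdeg_le_cardinalMk k (Set.range s')
  have h3 : Cardinal.mk (Set.range s') ≤ (Fintype.card ι : Cardinal) := by
    classical
    have : Fintype (Set.range s') := Set.fintypeRange s'
    rw [Cardinal.mk_fintype]
    exact_mod_cast Fintype.card_range_le s'
  have h4 := Cardinal.lift_le.{0}.2 (h2.trans h3)
  have h5 := h1.trans h4
  simpa using h5

end tr
section gen2
open Polynomial

theorem ChainLE.mono {S S' : Set (Subring Om)} (h : S ⊆ S') {r : ℕ} (H : ChainLE S' r) :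
    ChainLE S r := fun l c hc hS => H l c hc fun i => h (hS i)

theorem VO_anti {D D' : Set Om} {L : Subfield Om} (h : D ⊆ D') : VO D' L ⊆ VO D L :=
  fun _ hW => ⟨h.trans hW.1, hW.2⟩

theorem Tr.anti {L L' : Subfield Om} {t : Om} (h : L ≤ L') (H : Tr L' t) : Tr L t :=
  fun f hf => H f (PS_mono (fun _ hx => h hx) hf)

theorem Tr.add {L : Subfield Om} {t a : Om} (H : Tr L t) (ha : a ∈ L) : Tr L (t + a) := by
  intro f hf e
  have h1 : f.comp (X + C a) ∈ PS L.toSubring := by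
    rw [comp_eq_sum_left, Polynomial.sum]
    exact sum_mem fun i _ => mul_mem (C_mem_PS (hf i))
      (pow_mem (add_mem (X_mem_PS _) (C_mem_PS ha)) _)
  have h2 := H _ h1 (by simpa [eval_comp] using e)
  have h3 := congrArg (fun p => p.comp (X - C a)) h2
  simpa [comp_assoc] using h3

theorem Tr.of_transcendental {k0 : Type*} [Field k0] [Algebra k0 Om]
    {E : IntermediateField k0 Om} {t : Om} (h : Transcendental E t) : Tr E.toSubfield t := by
  intro f hf e
  have : f ∈ Polynomial.lifts (algebraMap E Om) := by
    rw [Polynomial.lifts_iff_coeff_lifts]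
    intro i
    exact ⟨⟨f.coeff i, hf i⟩, rfl⟩
  obtain ⟨g, rfl⟩ := this
  rw [transcendental_iff] at h
  have := h g (by rwa [coe_mapRingHom, eval_map_algebraMap] at e)
  rw [this]; simp

open scoped IntermediateField.algebraAdjoinAdjoin in
theorem Tr.of_indep {k0 : Type*} [Field k0] [Algebra k0 Om] {ι : Type*} {x : ι → Om}
    (hx : AlgebraicIndependent k0 x) {s : Set ι} {i : ι} (hi : i ∉ s) {L : Subfield Om}
    (hL : L ≤ (IntermediateField.adjoin k0 (x '' s)).toSubfield) : Tr L (x i) := by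
  refine Tr.anti hL (Tr.of_transcendental ?_)
  have := hx.transcendental_adjoin hi
  intro h
  apply this
  exact (IsFractionRing.isAlgebraic_iff (Algebra.adjoin k0 (x '' s))
    (IntermediateField.adjoin k0 (x '' s)) Om).2 h

/-- intermediate fields -/
def stage {m : ℕ} (k : Subfield Om) (Z : Fin m → Om) (j : ℕ) : Subfield Om :=
  Subfield.closure ((k : Set Om) ∪ Z '' {i | i.val < j})

theorem k_le_stage {m : ℕ} (k : Subfield Om) (Z : Fin m → Om) (j : ℕ) : k ≤ stage k Z j :=
  fun _ hx => Subfield.subset_closure (Or.inl hx)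

theorem stage_zero {m : ℕ} (k : Subfield Om) (Z : Fin m → Om) : stage k Z 0 = k := by
  simp [stage]

theorem stage_succ {m : ℕ} (k : Subfield Om) (Z : Fin m → Om) (j : Fin m) :
    stage k Z (j + 1) = LT (stage k Z j) (Z j) := by
  apply le_antisymm
  · refine Subfield.closure_le.2 ?_
    rintro x (hx | ⟨i, hi, rfl⟩)
    · exact L_le_LT _ _ (k_le_stage _ _ _ hx)
    · rcases Nat.lt_succ_iff_lt_or_eq.1 hi with h | h
      · exact L_le_LT _ _ (Subfield.subset_closure (Or.inr ⟨i, h, rfl⟩))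
      · rw [Fin.ext h]; exact T_mem_LT _ _
  · refine Subfield.closure_le.2 ?_
    rintro x (hx | hx)
    · refine Subfield.closure_mono ?_ hx
      exact Set.union_subset_union_right _ (Set.image_mono fun i (hi : i.val < j) =>
        Nat.lt_succ_of_lt hi)
    · rw [Set.mem_singleton_iff.1 hx]
      exact Subfield.subset_closure (Or.inr ⟨j, Nat.lt_succ_self _, rfl⟩)

theorem stage_chain {m : ℕ} (k : Subfield Om) (Z : Fin m → Om)
    (h : ∀ j : Fin m, Tr (stage k Z j) (Z j)) :
    ∀ j ≤ m, ChainGE (VO (k : Set Om) (stage k Z j)) j := by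
  intro j
  induction j with
  | zero =>
    intro _
    rw [stage_zero]
    refine ⟨fun _ => k.toSubring, fun i j h => ?_, fun i => self_VO subset_rfl⟩
    exact absurd h (by rw [Fin.lt_def]; omega)
  | succ j ih =>
    intro hj
    have h1 := ih (Nat.le_of_succ_le hj)
    have h2 := h ⟨j, hj⟩
    have h3 := chain_ge (k := k.toSubring) h2 h1
    have e := stage_succ k Z ⟨j, hj⟩
    rw [show stage k Z (j + 1) = _ from e]
    exact h3.mono (VO_anti (le_comp h2 (k_le_stage k Z j)))

/-- polynomial subring -/
theorem mem_poly {F : Subfield Om} {y x : Om} :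
    x ∈ Subring.closure ((F : Set Om) ∪ {y}) ↔ ∃ f ∈ PS F.toSubring, f.eval y = x := by
  constructor
  · intro hx
    have : Subring.closure ((F : Set Om) ∪ {y}) ≤ (PS F.toSubring).map (evalRingHom y) := by
      refine Subring.closure_le.2 ?_
      rintro x (hx | hx)
      · exact ⟨C x, C_mem_PS hx, by simp⟩
      · exact ⟨X, X_mem_PS _, by simpa using hx.symm⟩
    exact this hx
  · rintro ⟨f, hf, rfl⟩
    have h1 : F.toSubring ≤ Subring.closure ((F : Set Om) ∪ {y}) :=
      fun x hx => Subring.subset_closure (Or.inl hx)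
    have h2 : y ∈ Subring.closure ((F : Set Om) ∪ {y}) :=
      Subring.subset_closure (Or.inr rfl)
    exact eval_mem h1 h2 hf

theorem divX_mem {S : Subring Om} {f : Om[X]} (hf : f ∈ PS S) (h0 : f.coeff 0 = 0) :
    ∃ h ∈ PS S, f = X * h := by
  refine ⟨divX f, fun i => by rw [coeff_divX]; exact hf _, ?_⟩
  conv_lhs => rw [← divX_mul_X_add f, h0]
  simp [mul_comm]

end gen2

end TowerGen

end GenericPart
noncomputable section AmbPart

open Polynomial TowerGen

variable (k0 : Type) [Field k0] (r : ℕ)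

/-- all variables -/
def ambV (i : TowerVars r) : Amb k0 r :=
  algebraMap (MvPolynomial (TowerVars r) k0) (Amb k0 r) (MvPolynomial.X i)

theorem ambV_indep : AlgebraicIndependent k0 (ambV k0 r) := by
  have h := MvPolynomial.algebraicIndependent_X (TowerVars r) k0
  exact h.map' (f := IsScalarTower.toAlgHom k0 (MvPolynomial (TowerVars r) k0) (Amb k0 r))
    (IsFractionRing.injective _ _)

/-- adjoin a set of variables -/
def adj (s : Set (TowerVars r)) : Subfield (Amb k0 r) :=
  (IntermediateField.adjoin k0 (ambV k0 r '' s)).toSubfield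

theorem adj_mem {s : Set (TowerVars r)} {i : TowerVars r} (hi : i ∈ s) :
    ambV k0 r i ∈ adj k0 r s := by
  exact IntermediateField.subset_adjoin k0 _ ⟨i, hi, rfl⟩

theorem base_adj (s : Set (TowerVars r)) : baseSet k0 r ⊆ adj k0 r s := by
  rintro _ ⟨c, rfl⟩
  have := (IntermediateField.adjoin k0 (ambV k0 r '' s)).algebraMap_mem c
  rw [IsScalarTower.algebraMap_apply k0 (MvPolynomial (TowerVars r) k0) (Amb k0 r)] at this
  exact this

theorem tr_adj {s : Set (TowerVars r)} {i : TowerVars r} (hi : i ∉ s) {L : Subfield (Amb k0 r)}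
    (hL : L ≤ adj k0 r s) : Tr L (ambV k0 r i) :=
  Tr.of_indep (ambV_indep k0 r) hi hL

theorem k_adj (n : ℕ) {s : Set (TowerVars r)} (hs : ∀ i ≤ n, Sum.inl i ∈ s) :
    kfld k0 r n ≤ adj k0 r s := by
  refine Subfield.closure_le.2 ?_
  rintro x (hx | ⟨i, _, hi, rfl⟩)
  · exact base_adj k0 r s hx
  · exact adj_mem k0 r (hs i hi)

theorem F_adj (n : ℕ) {s : Set (TowerVars r)} (hs : ∀ i ≤ n, Sum.inl i ∈ s)
    (hs' : ∀ i, Sum.inr (Sum.inr i) ∈ s) : Ffld k0 r n ≤ adj k0 r s := by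
  refine Subfield.closure_le.2 ?_
  rintro x (hx | ⟨i, rfl⟩)
  · exact k_adj k0 r n hs hx
  · exact adj_mem k0 r (hs' i)

theorem K_adj (n : ℕ) {s : Set (TowerVars r)} (hs : ∀ i ≤ n, Sum.inl i ∈ s)
    (hs' : ∀ i, Sum.inr i ∈ s) : Kfld k0 r n ≤ adj k0 r s := by
  refine Subfield.closure_le.2 ?_
  rintro x (hx | hx)
  · exact F_adj k0 r n hs (fun i => hs' _) hx
  · rw [Set.mem_singleton_iff.1 hx]
    exact adj_mem k0 r (hs' _)

theorem trY (n : ℕ) : Tr (Ffld k0 r n) (ambY k0 r) :=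
  tr_adj k0 r (s := {i | i ≠ Sum.inr (Sum.inl ())}) (i := Sum.inr (Sum.inl ())) (by simp)
    (F_adj k0 r n (by simp) (by simp))

theorem trZ (n : ℕ) (j : Fin (r - 1)) : Tr (stage (kfld k0 r n) (ambZ k0 r) j) (ambZ k0 r j) := by
  refine tr_adj k0 r (s := {i | i ≠ Sum.inr (Sum.inr j)}) (i := Sum.inr (Sum.inr j)) (by simp) ?_
  refine Subfield.closure_le.2 ?_
  rintro x (hx | ⟨i, hi, rfl⟩)
  · exact k_adj k0 r n (by simp) hx
  · refine adj_mem k0 r (i := Sum.inr (Sum.inr i)) ?_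
    have hi' : i.val < j.val := hi
    simp only [ne_eq, Set.mem_ofPred_eq, Sum.inr.injEq]
    rintro rfl
    exact lt_irrefl _ hi'

theorem k_le_F (n : ℕ) : kfld k0 r n ≤ Ffld k0 r n :=
  fun _ hx => Subfield.subset_closure (Or.inl hx)

theorem F_le_K (n : ℕ) : Ffld k0 r n ≤ Kfld k0 r n :=
  fun _ hx => Subfield.subset_closure (Or.inl hx)

theorem Y_mem_K (n : ℕ) : ambY k0 r ∈ Kfld k0 r n := Subfield.subset_closure (Or.inr rfl)

theorem Z_mem_F (n : ℕ) (i) : ambZ k0 r i ∈ Ffld k0 r n :=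
  Subfield.subset_closure (Or.inr ⟨i, rfl⟩)

theorem X_mem_k {n i : ℕ} (h1 : 1 ≤ i) (h : i ≤ n) : ambX k0 r i ∈ kfld k0 r n :=
  Subfield.subset_closure (Or.inr ⟨i, h1, h, rfl⟩)

theorem X'_eq (n : ℕ) : ambX' k0 r n = ambX k0 r n + (ambY k0 r)⁻¹ := by
  have h := (trY k0 r 0).t0
  rw [ambX']; field_simp; ring

theorem trX' (n : ℕ) : Tr (Kfld k0 r n) (ambX' k0 r (n + 1)) := by
  rw [X'_eq]
  refine Tr.add ?_ (inv_mem (Y_mem_K k0 r n))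
  refine tr_adj k0 r (s := {i | i ≠ Sum.inl (n + 1)}) (i := Sum.inl (n + 1)) (by simp) ?_
  refine K_adj k0 r n ?_ (by simp)
  intro i hi
  simp only [ne_eq, Set.mem_ofPred_eq, Sum.inl.injEq]
  omega

theorem K_succ (n : ℕ) : Kfld k0 r (n + 1) = LT (Kfld k0 r n) (ambX' k0 r (n + 1)) := by
  have hk : kfld k0 r n ≤ kfld k0 r (n + 1) := by
    refine Subfield.closure_le.2 ?_
    rintro x (hx | ⟨i, hi, hi', rfl⟩)
    · exact Subfield.subset_closure (Or.inl hx)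
    · exact X_mem_k k0 r hi (by omega)
  apply le_antisymm
  · refine Subfield.closure_le.2 ?_
    rintro x (hx | hx)
    · refine (Subfield.closure_le (t := LT (Kfld k0 r n) (ambX' k0 r (n + 1)))).2 ?_ hx
      rintro x (hx | ⟨i, rfl⟩)
      · refine (Subfield.closure_le (t := LT (Kfld k0 r n) (ambX' k0 r (n + 1)))).2 ?_ hx
        rintro x (hx | ⟨i, hi, hi', rfl⟩)
        · exact L_le_LT _ _ (F_le_K k0 r n (k_le_F k0 r n (Subfield.subset_closure (Or.inl hx))))
        · by_cases h : i ≤ n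
          · exact L_le_LT _ _ (F_le_K k0 r n (k_le_F k0 r n (X_mem_k k0 r hi h)))
          · have h' : i = n + 1 := by omega
            subst h'
            have e : ambX k0 r (n + 1) = ambX' k0 r (n + 1) - (ambY k0 r)⁻¹ := by
              rw [X'_eq]; ring
            rw [e]
            exact sub_mem (T_mem_LT _ _) (L_le_LT _ _ (inv_mem (Y_mem_K k0 r n)))
      · exact L_le_LT _ _ (F_le_K k0 r n (Z_mem_F k0 r n i))
    · rw [Set.mem_singleton_iff.1 hx]
      exact L_le_LT _ _ (Y_mem_K k0 r n)
  · refine Subfield.closure_le.2 ?_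
    rintro x (hx | hx)
    · refine (Subfield.closure_le (t := Kfld k0 r (n + 1))).2 ?_ hx
      rintro x (hx | hx)
      · refine F_le_K k0 r (n + 1) ((Subfield.closure_le (t := Ffld k0 r (n + 1))).2 ?_ hx)
        rintro x (hx | ⟨i, rfl⟩)
        · exact k_le_F k0 r _ (hk hx)
        · exact Z_mem_F k0 r _ i
      · rw [Set.mem_singleton_iff.1 hx]
        exact Y_mem_K k0 r _
    · rw [Set.mem_singleton_iff.1 hx, X'_eq]
      exact add_mem (F_le_K k0 r _ (k_le_F k0 r _ (X_mem_k k0 r (by omega) le_rfl)))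
        (inv_mem (Y_mem_K k0 r _))

theorem A_eq (n : ℕ) : Aset k0 r n =
    ((TowerGen.comp (trY k0 r n) (kfld k0 r n).toSubring : Subring (Amb k0 r)) : Set (Amb k0 r)) := by
  have ht := trY k0 r n
  have hp : ∀ x, x ∈ polyRing k0 r n ↔ ∃ f ∈ PS (Ffld k0 r n).toSubring, f.eval (ambY k0 r) = x :=
    fun x => mem_poly
  ext x
  constructor
  · rintro ⟨c, hc, _, ⟨_, ⟨f, pf, g, pg, hng, rfl⟩, rfl⟩, rfl⟩
    obtain ⟨f, hf, rfl⟩ := (hp _).1 pf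
    obtain ⟨g, hg, rfl⟩ := (hp _).1 pg
    have g0 : g.coeff 0 ≠ 0 := by
      intro h
      obtain ⟨h, hh, e⟩ := divX_mem hg h
      exact hng ⟨_, (hp _).2 ⟨h, hh, rfl⟩, by rw [e]; simp⟩
    have n1 : g.eval (ambY k0 r) ≠ 0 := ht.ne hg (by rintro rfl; simp at g0)
    refine ⟨C c * g + X * f, add_mem (mul_mem (C_mem_PS (k_le_F k0 r n hc)) hg)
      (mul_mem (X_mem_PS _) hf), g, hg, g0, ?_, ?_⟩
    · simp only [coeff_add, mul_coeff_zero, coeff_C_zero, coeff_X_zero, zero_mul, add_zero]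
      rw [mul_div_cancel_right₀ _ g0]
      exact hc
    · simp only [eval_add, eval_mul, eval_C, eval_X]
      rw [add_div, mul_div_cancel_right₀ _ n1, mul_div_assoc]
  · rintro ⟨f, hf, g, hg, g0, hc, rfl⟩
    have n1 : g.eval (ambY k0 r) ≠ 0 := ht.ne hg (by rintro rfl; simp at g0)
    have hp1 : f - C (f.coeff 0 / g.coeff 0) * g ∈ PS (Ffld k0 r n).toSubring :=
      sub_mem hf (mul_mem (C_mem_PS (k_le_F k0 r n hc)) hg)
    obtain ⟨h, hh, e⟩ := divX_mem hp1 (by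
      simp only [coeff_sub, mul_coeff_zero, coeff_C_zero]
      rw [div_mul_cancel₀ _ g0, sub_self])
    refine ⟨_, hc, _, ⟨_, ⟨_, (hp _).2 ⟨h, hh, rfl⟩, _, (hp _).2 ⟨g, hg, rfl⟩, ?_, rfl⟩, rfl⟩, ?_⟩
    · rintro ⟨q, pq, e'⟩
      obtain ⟨q, hq, rfl⟩ := (hp _).1 pq
      have := ht.inj hg (mul_mem (X_mem_PS _) hq) (by simpa using e')
      apply g0
      rw [this]; simp
    · have e2 := congrArg (fun p => eval (ambY k0 r) p) e
      simp only [eval_sub, eval_mul, eval_C, eval_X] at e2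
      rw [← mul_div_assoc, ← e2, sub_div, mul_div_cancel_right₀ _ n1]
      ring

theorem A_chain_le (hr : 2 ≤ r) (n : ℕ) : ChainLE (VO (Aset k0 r n) (Kfld k0 r n)) r := by
  let s : Unit ⊕ Fin (r - 1) → Amb k0 r := Sum.elim (fun _ => ambY k0 r) (ambZ k0 r)
  have hK : Kfld k0 r n = Subfield.closure ((kfld k0 r n : Set (Amb k0 r)) ∪ Set.range s) := by
    apply le_antisymm
    · refine Subfield.closure_le.2 ?_
      rintro x (hx | hx)
      · refine Subfield.closure_mono (Set.union_subset_union_right _ ?_) hx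
        rintro _ ⟨i, rfl⟩
        exact ⟨Sum.inr i, rfl⟩
      · rw [Set.mem_singleton_iff.1 hx]
        exact Subfield.subset_closure (Or.inr ⟨Sum.inl (), rfl⟩)
    · refine Subfield.closure_le.2 ?_
      rintro x (hx | ⟨i | i, rfl⟩)
      · exact F_le_K k0 r n (k_le_F k0 r n hx)
      · exact Y_mem_K k0 r n
      · exact F_le_K k0 r n (Z_mem_F k0 r n i)
  have h := chain_le_card s hK
  have hc : Fintype.card (Unit ⊕ Fin (r - 1)) = r := by simp; omega
  rw [hc] at h
  refine h.mono (VO_anti ?_)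
  rw [A_eq]
  exact le_comp (trY k0 r n) (k := (kfld k0 r n).toSubring) (k_le_F k0 r n)

theorem A_chain_ge (hr : 2 ≤ r) (n : ℕ) : ChainGE (VO (Aset k0 r n) (Kfld k0 r n)) r := by
  have h := stage_chain (kfld k0 r n) (ambZ k0 r) (trZ k0 r n) (r - 1) le_rfl
  have e : stage (kfld k0 r n) (ambZ k0 r) (r - 1) = Ffld k0 r n := by
    rw [stage, Ffld]
    congr 2
    ext x
    simp
  rw [e] at h
  have h2 := chain_ge (k := (kfld k0 r n).toSubring) (trY k0 r n) h
  rw [A_eq]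
  have hc : r - 1 + 1 = r := by omega
  rw [hc] at h2
  exact h2

theorem D_succ (n : ℕ) : Dset k0 r (n + 2) =
    KR (Dset k0 r (n + 1)) (Kfld k0 r (n + 1)) (ambX' k0 r (n + 2)) ∩ Aset k0 r (n + 2) := rfl

theorem main_ind (hr : 2 ≤ r) (n : ℕ) : Dset k0 r (n + 1) ⊆ Kfld k0 r (n + 1) ∧
    ChainLE (VO (Dset k0 r (n + 1)) (Kfld k0 r (n + 1))) r ∧
    ChainGE (VO (Dset k0 r (n + 1)) (Kfld k0 r (n + 1))) r := by
  have AK : ∀ n, Aset k0 r n ⊆ Kfld k0 r n := fun n => by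
    rw [A_eq]; exact comp_le (trY k0 r n) _
  induction n with
  | zero => exact ⟨AK 1, A_chain_le k0 r hr 1, A_chain_ge k0 r hr 1⟩
  | succ n ih =>
    obtain ⟨h1, h2, -⟩ := ih
    change Dset k0 r (n + 2) ⊆ Kfld k0 r (n + 2) ∧
      ChainLE (VO (Dset k0 r (n + 2)) (Kfld k0 r (n + 2))) r ∧
      ChainGE (VO (Dset k0 r (n + 2)) (Kfld k0 r (n + 2))) r
    have sub : Dset k0 r (n + 2) ⊆ Aset k0 r (n + 2) := by
      rw [D_succ]; exact Set.inter_subset_right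
    refine ⟨sub.trans (AK _), ?_, (A_chain_ge k0 r hr (n + 2)).mono (VO_anti sub)⟩
    have hK := K_succ k0 r (n + 1)
    change Kfld k0 r (n + 2) = LT (Kfld k0 r (n + 1)) (ambX' k0 r (n + 2)) at hK
    have hA := A_chain_le k0 r hr (n + 2)
    have hX : ambX k0 r (n + 2) ∈ Ffld k0 r (n + 2) :=
      k_le_F k0 r _ (X_mem_k k0 r (by omega) le_rfl)
    have hinv : (ambX' k0 r (n + 2))⁻¹ = ambY k0 r / (1 + ambY k0 r * ambX k0 r (n + 2)) := by
      rw [ambX', inv_div]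
    rw [D_succ, A_eq, hK]
    rw [A_eq, hK] at hA
    refine step_le (trX' k0 r (n + 1)) h1 ?_ ?_ ?_ ?_ h2 hA
    · have := comp_le (trY k0 r (n + 2)) (kfld k0 r (n + 2)).toSubring
      change _ ≤ (Kfld k0 r (n + 2)).toSubring at this
      rwa [hK] at this
    · rw [hinv]; exact comp_u _ _ hX
    · intro x hx
      rw [← hK] at hx
      rw [hinv]
      exact comp_abs _ _ hx hX
    · intro a ha
      rw [hinv]
      exact comp_jac _ _ hX ha

end AmbPart

/-- In the tower construction, for every `n ≥ 2` the Kronecker function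
ring `Bₙ = Kr_{K_{n-1}(X′ₙ)}(D_{n-1}, b)` is an `r`-dimensional Bézout domain. -/
theorem tower_B_bezout_of_dim_r
    (k0 : Type) [Field k0] (r : ℕ) (hr : 2 ≤ r) (n : ℕ) (hn : 2 ≤ n) :
    ∀ B' : Subring (Amb k0 r), (B' : Set (Amb k0 r)) = Bset k0 r n →
      IsBezout ↥B' ∧ ringKrullDim ↥B' = (r : WithBot ℕ∞) := by
  intro B' hB
  obtain ⟨m, rfl⟩ : ∃ m, n = m + 2 := ⟨n - 2, by omega⟩
  have hB' : (B' : Set (Amb k0 r)) =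
      TowerGen.KR (Dset k0 r (m + 1)) (Kfld k0 r (m + 1)) (ambX' k0 r (m + 2)) := hB
  obtain ⟨h1, h2, h3⟩ := main_ind k0 r hr m
  have hT := trX' k0 r (m + 1)
  exact ⟨TowerGen.bezout hT h1 B' hB',
    le_antisymm (TowerGen.dim_le hT hB' h1 h2) (TowerGen.dim_ge hT hB' h3)⟩
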